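/- arXiv:2306.11621 — 9 statements merged into one kernel-verified Lean document; each statement's English description precedes it below -/
import Mathlib

section
/- Suppose G is a unitary 1-design, that there exist group elements g_0, …, g_{d-1} ∈ G such that the vectors |i⟩ := g_i|0⟩ form an orthonormal basis of ℂ^d, and that Π_G ≠ 0. Then there exists a vector |Φ⟩ ∈ H_P with Π_G|Φ⟩ ≠ 0 such that the linear map E : ℂ^d → H_P defined on this basis by E(|i⟩) = N · ∑_{g∈G} ⟨0|g†|i⟩ ρ(g)|Φ⟩, where N = (d/|G|)/‖Π_G|Φ⟩‖, satisfies E(U|ψ⟩) = ρ(U) E(|ψ⟩) for every U ∈ G and every |ψ⟩ ∈ ℂ^d. -/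
open scoped ComplexConjugate ComplexInnerProductSpace

noncomputable section

/-- The matrix underlying an element of a subgroup `G` of the unitary group. -/
def gMat {d : ℕ} {G : Subgroup (Matrix.unitaryGroup (Fin d) ℂ)} (g : G) :
    Matrix (Fin d) (Fin d) ℂ :=
  ((g : Matrix.unitaryGroup (Fin d) ℂ) : Matrix (Fin d) (Fin d) ℂ)

/-- The distinguished vector `|0⟩ = e₀` of `ℂ^d`. -/
def e0 (d : ℕ) [NeZero d] : EuclideanSpace ℂ (Fin d) := EuclideanSpace.single 0 1

/-- Action of an element of `G` on `ℂ^d`. -/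
def gAct {d : ℕ} {G : Subgroup (Matrix.unitaryGroup (Fin d) ℂ)} (g : G)
    (v : EuclideanSpace ℂ (Fin d)) : EuclideanSpace ℂ (Fin d) :=
  Matrix.toEuclideanLin (gMat g) v

/-- `G` is a unitary 1-design. -/
def IsUnitaryOneDesign {d : ℕ} (G : Subgroup (Matrix.unitaryGroup (Fin d) ℂ)) [Fintype G] :
    Prop :=
  ∀ A : Matrix (Fin d) (Fin d) ℂ,
    (Fintype.card G : ℂ)⁻¹ • ∑ g : G, gMat g * A * star (gMat g) = (A.trace / d) • 1

/-- The operator `Π_G := (d/|G|) ∑_{g∈G} ⟨0|g†|0⟩ ρ(g)`. -/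
def PiG {d : ℕ} [NeZero d] (G : Subgroup (Matrix.unitaryGroup (Fin d) ℂ)) [Fintype G]
    {H_P : Type*} [NormedAddCommGroup H_P] [InnerProductSpace ℂ H_P] [CompleteSpace H_P]
    (ρ : G →* unitary (H_P →L[ℂ] H_P)) : H_P →L[ℂ] H_P :=
  ((d : ℂ) / (Fintype.card G : ℂ)) •
    ∑ g : G, (starRingEnd ℂ) (gMat g 0 0) • ((ρ g : H_P →L[ℂ] H_P))

/-!
Summing the translates `ρ(g) |Φ⟩⟨0| g†` of the rank-one operator `|Φ⟩⟨0|` over `G` gives an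
operator that intertwines the action of `G` on `ℂ^d` with `ρ`; the sum is `Representation.norm` of
the conjugation representation `Representation.linHom`. Since `⟨0|g†|ψ⟩` is the inner product of
`g|0⟩` with `|ψ⟩`, this operator is `ψ ↦ ∑ g, ⟨0|g†|ψ⟩ ρ(g)|Φ⟩`, a multiple of the encoding.
-/

section Twirl

variable {k G V W : Type*} [CommRing k] [Group G] [Fintype G]
  [AddCommGroup V] [Module k V] [AddCommGroup W] [Module k W]

theorem isIntertwiningMap_norm_linHom (σ : Representation k G V) (τ : Representation k G W)
    (f : V →ₗ[k] W) : σ.IsIntertwiningMap τ ((σ.linHom τ).norm f) :=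
  (Representation.mem_linHom_invariants_iff_isIntertwining _).mp fun g =>
    (σ.linHom τ).self_norm_apply g f

end Twirl

section UnitaryRepresentation

variable {𝕜 G V : Type*} [RCLike 𝕜] [Group G]
  [NormedAddCommGroup V] [InnerProductSpace 𝕜 V] [CompleteSpace V]

/-- The linear representation underlying a homomorphism into the unitary operators of a Hilbert
space, giving access to the purely algebraic theory of representations. -/
def unitaryRepresentation (σ : G →* unitary (V →L[𝕜] V)) : Representation 𝕜 G V :=
  (ContinuousLinearMap.toLinearMapRingHom : (V →L[𝕜] V) →+* (V →ₗ[𝕜] V)).toMonoidHom.comp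
    ((unitary (V →L[𝕜] V)).subtype.comp σ)

theorem unitaryRepresentation_apply (σ : G →* unitary (V →L[𝕜] V)) (g : G) (v : V) :
    unitaryRepresentation σ g v = (σ g : V →L[𝕜] V) v :=
  rfl

theorem inner_unitaryRepresentation_inv_right (σ : G →* unitary (V →L[𝕜] V)) (g : G) (v w : V) :
    inner 𝕜 v (unitaryRepresentation σ g⁻¹ w) = inner 𝕜 (unitaryRepresentation σ g v) w :=
  calc inner 𝕜 v (unitaryRepresentation σ g⁻¹ w)
      = inner 𝕜 (unitaryRepresentation σ g v)
          (unitaryRepresentation σ g (unitaryRepresentation σ g⁻¹ w)) :=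
        (Unitary.inner_map_map (σ g) _ _).symm
    _ = inner 𝕜 (unitaryRepresentation σ g v) w := by
        rw [Representation.self_inv_apply]

theorem norm_linHom_inner_smulRight_apply [Fintype G] {W : Type*} [AddCommGroup W] [Module 𝕜 W]
    (σ : G →* unitary (V →L[𝕜] V)) (τ : Representation 𝕜 G W) (v : V) (w : W) (x : V) :
    ((unitaryRepresentation σ).linHom τ).norm ((innerₛₗ 𝕜 v).smulRight w) x =
      ∑ g, inner 𝕜 (unitaryRepresentation σ g v) x • τ g w := by
  simp [Representation.norm, inner_unitaryRepresentation_inv_right]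

end UnitaryRepresentation

/-- The action of a group of unitary matrices on Euclidean space by unitary operators. -/
def euclideanUnitaryHom {𝕜 n : Type*} [RCLike 𝕜] [Fintype n] [DecidableEq n]
    (G : Subgroup (Matrix.unitaryGroup n 𝕜)) :
    G →* unitary (EuclideanSpace 𝕜 n →L[𝕜] EuclideanSpace 𝕜 n) where
  toFun g := ⟨Matrix.toEuclideanCLM (n := n) (𝕜 := 𝕜) g.1, Unitary.map_mem _ g.1.2⟩
  map_one' := Subtype.ext (map_one _)
  map_mul' _ _ := Subtype.ext (map_mul _ _ _)

theorem unitaryRepresentation_euclideanUnitaryHom_apply {d : ℕ}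
    {G : Subgroup (Matrix.unitaryGroup (Fin d) ℂ)} (g : G) (v : EuclideanSpace ℂ (Fin d)) :
    unitaryRepresentation (euclideanUnitaryHom G) g v = gAct g v :=
  rfl

theorem encoding_exists_general (d : ℕ) [NeZero d]
    (G : Subgroup (Matrix.unitaryGroup (Fin d) ℂ)) [Fintype G]
    {H_P : Type*} [NormedAddCommGroup H_P] [InnerProductSpace ℂ H_P] [CompleteSpace H_P]
    (ρ : G →* unitary (H_P →L[ℂ] H_P))
    (hPiG : PiG G ρ ≠ 0) :
    ∃ Φ : H_P, PiG G ρ Φ ≠ 0 ∧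
      ∃ E : EuclideanSpace ℂ (Fin d) →ₗ[ℂ] H_P,
        (∀ ψ : EuclideanSpace ℂ (Fin d),
          E ψ =
            (((d : ℂ) / (Fintype.card G : ℂ)) / (‖PiG G ρ Φ‖ : ℂ)) •
              ∑ g : G, ⟪gAct g (e0 d), ψ⟫ • ((ρ g : H_P →L[ℂ] H_P) Φ)) ∧
        (∀ (U : G) (ψ : EuclideanSpace ℂ (Fin d)),
          E (gAct U ψ) = (ρ U : H_P →L[ℂ] H_P) (E ψ)) := by
  obtain ⟨Φ, hΦ⟩ := ContinuousLinearMap.exists_ne_zero hPiG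
  let σ := euclideanUnitaryHom G
  let N : ℂ := (d : ℂ) / (Fintype.card G : ℂ) / (‖PiG G ρ Φ‖ : ℂ)
  let twirl := ((unitaryRepresentation σ).linHom (unitaryRepresentation ρ)).norm
    ((innerₛₗ ℂ (e0 d)).smulRight Φ)
  refine ⟨Φ, hΦ, N • twirl, fun ψ => ?_, fun U ψ => ?_⟩
  · simp only [N, twirl, σ, LinearMap.smul_apply, norm_linHom_inner_smulRight_apply,
      unitaryRepresentation_euclideanUnitaryHom_apply, unitaryRepresentation_apply ρ]
  · have twirl_gAct : twirl (gAct U ψ) = (ρ U : H_P →L[ℂ] H_P) (twirl ψ) := by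
      rw [← unitaryRepresentation_euclideanUnitaryHom_apply, ← unitaryRepresentation_apply ρ]
      exact (isIntertwiningMap_norm_linHom _ _ _).isIntertwining U ψ
    rw [LinearMap.smul_apply, LinearMap.smul_apply, map_smul, twirl_gAct]

/-- Main lemma: if `G` is a unitary 1-design, `{g_i |0⟩}` is an orthonormal basis of `ℂ^d`,
and `Π_G ≠ 0`, then there is a state `|Φ⟩` with `Π_G |Φ⟩ ≠ 0` such that the encoding
`E(|i⟩) = N ∑_g ⟨0|g†|i⟩ ρ(g)|Φ⟩` (with `N = (d/|G|)/‖Π_G|Φ⟩‖`) is `G`-equivariant. -/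
theorem encoding_exists (d : ℕ) [NeZero d]
    (G : Subgroup (Matrix.unitaryGroup (Fin d) ℂ)) [Fintype G]
    {H_P : Type*} [NormedAddCommGroup H_P] [InnerProductSpace ℂ H_P] [CompleteSpace H_P]
    (ρ : G →* unitary (H_P →L[ℂ] H_P))
    (hdesign : IsUnitaryOneDesign G)
    (gs : Fin d → G)
    (hbasis : Orthonormal ℂ (fun i : Fin d => gAct (gs i) (e0 d)))
    (hPiG : PiG G ρ ≠ 0) :
    ∃ Φ : H_P, PiG G ρ Φ ≠ 0 ∧
      ∃ E : EuclideanSpace ℂ (Fin d) →ₗ[ℂ] H_P,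
        (∀ i : Fin d,
          E (gAct (gs i) (e0 d)) =
            (((d : ℂ) / (Fintype.card G : ℂ)) / (‖PiG G ρ Φ‖ : ℂ)) •
              ∑ g : G, ⟪gAct g (e0 d), gAct (gs i) (e0 d)⟫ • ((ρ g : H_P →L[ℂ] H_P) Φ)) ∧
        (∀ (U : G) (ψ : EuclideanSpace ℂ (Fin d)),
          E (gAct U ψ) = (ρ U : H_P →L[ℂ] H_P) (E ψ)) := by
  obtain ⟨Φ, hΦ, E, hE, hEquivariant⟩ := encoding_exists_general d G ρ hPiG
  exact ⟨Φ, hΦ, E, fun _ => hE _, hEquivariant⟩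

end
end

section
/- If G is a unitary 1-design, then the operator Π_G is idempotent: Π_G² = Π_G. -/
open scoped ComplexConjugate

noncomputable section

/-!
For a matrix `A` put `e_ρ(A) = (d/|G|) ∑_g tr(A g†) ρ(g)`, so that `Π_G = e_ρ(|0⟩⟨0|)`.
Reindexing the sum gives `ρ(g) e_ρ(B) = e_ρ(g B)`, hence by linearity
`e_ρ(A) e_ρ(B) = e_ρ((d/|G|) ∑_g tr(A g†) g B)`. The design property yields the
reconstruction formula `(d/|G|) ∑_g tr(A g†) g = A`, so `e_ρ` is multiplicative and maps the
idempotent `|0⟩⟨0|` to an idempotent.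
-/

section CoeffSum

variable {d : ℕ} {G : Subgroup (Matrix.unitaryGroup (Fin d) ℂ)}

/-- The inclusion `gMat` as a monoid homomorphism, i.e. the defining representation of `G`. -/
def gMatHom (G : Subgroup (Matrix.unitaryGroup (Fin d) ℂ)) : G →* Matrix (Fin d) (Fin d) ℂ where
  toFun := gMat
  map_one' := rfl
  map_mul' _ _ := rfl

lemma gMatHom_apply (g : G) : gMatHom G g = gMat g := rfl

lemma star_gMat_mul (g h : G) : star (gMat (g * h)) = star (gMat h) * star (gMat g) :=
  star_mul (gMat g) (gMat h)

lemma star_gMat_mul_gMat (g : G) : star (gMat g) * gMat g = 1 :=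
  Matrix.UnitaryGroup.star_mul_self (g : Matrix.unitaryGroup (Fin d) ℂ)

lemma trace_single_mul_star_gMat (k l : Fin d) (g : G) :
    (Matrix.single k l 1 * star (gMat g)).trace = conj (gMat g k l) := by
  rw [Matrix.trace_single_mul, one_smul, Matrix.star_apply, starRingEnd_apply]

variable [Fintype G] {R : Type*} [Semiring R] [Algebra ℂ R]

/-- The weighted group sum `A ↦ (d/|G|) ∑_{g∈G} tr(A g†) ρ(g)`, linear in the matrix `A`.
Taking `A = |0⟩⟨0|` gives `Π_G`; the target of `ρ` may be any complex algebra. -/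
def coeffSum (ρ : G →* R) : Matrix (Fin d) (Fin d) ℂ →ₗ[ℂ] R :=
  ((d : ℂ) / Fintype.card G) •
    ∑ g : G, (Matrix.traceLinearMap (Fin d) ℂ ℂ ∘ₗ
      LinearMap.mulRight ℂ (star (gMat g))).smulRight (ρ g)

lemma coeffSum_apply (ρ : G →* R) (A : Matrix (Fin d) (Fin d) ℂ) :
    coeffSum ρ A =
      ((d : ℂ) / Fintype.card G) • ∑ g : G, (A * star (gMat g)).trace • ρ g := by
  simp [coeffSum]

lemma map_mul_coeffSum (ρ : G →* R) (g : G) (A : Matrix (Fin d) (Fin d) ℂ) :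
    ρ g * coeffSum ρ A = coeffSum ρ (gMat g * A) := by
  have trace_translate (h : G) :
      (gMat g * A * star (gMat (g * h))).trace = (A * star (gMat h)).trace := by
    rw [star_gMat_mul, mul_assoc, Matrix.trace_mul_comm, mul_assoc, mul_assoc,
      star_gMat_mul_gMat, mul_one]
  rw [coeffSum_apply, coeffSum_apply, mul_smul_comm, Finset.mul_sum,
    ← Equiv.sum_comp (Equiv.mulLeft g) fun h ↦ (gMat g * A * star (gMat h)).trace • ρ h]
  simp only [Equiv.coe_mulLeft, trace_translate, map_mul, mul_smul_comm]

namespace IsUnitaryOneDesign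

theorem sum_conj_smul_gMat (hG : IsUnitaryOneDesign G) (k l : Fin d) :
    ∑ g : G, conj (gMat g k l) • gMat g = ((Fintype.card G : ℂ) / d) • Matrix.single k l 1 := by
  ext i j
  have card_ne_zero : (Fintype.card G : ℂ) ≠ 0 := Nat.cast_ne_zero.mpr Fintype.card_ne_zero
  have conj_single_entry (g : G) :
      (gMat g * Matrix.single j l (1 : ℂ) * star (gMat g)) i k =
        conj (gMat g k l) * gMat g i j := by
    simp [Matrix.mul_apply, Matrix.single_apply, ite_and, mul_comm]
  have design_entry := congrFun₂ (hG (Matrix.single j l 1)) i k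
  simp only [Matrix.smul_apply, Matrix.sum_apply, conj_single_entry, smul_eq_mul,
    inv_mul_eq_iff_eq_mul₀ card_ne_zero] at design_entry
  simp only [Matrix.sum_apply, Matrix.smul_apply, smul_eq_mul, design_entry]
  obtain rfl | hik := eq_or_ne i k
  · obtain rfl | hjl := eq_or_ne j l
    · simp [div_eq_mul_inv]
    · simp [Matrix.trace_single_eq_of_ne j l _ hjl, hjl.symm]
  · simp [hik, hik.symm]

theorem coeffSum_gMatHom (hG : IsUnitaryOneDesign G) :
    coeffSum (gMatHom G) = LinearMap.id := by
  refine Matrix.ext_linearMap ℂ fun k l ↦ LinearMap.ext_ring ?_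
  have card_ne_zero : (Fintype.card G : ℂ) ≠ 0 := Nat.cast_ne_zero.mpr Fintype.card_ne_zero
  have d_ne_zero : (d : ℂ) ≠ 0 := Nat.cast_ne_zero.mpr k.pos.ne'
  calc coeffSum (gMatHom G) (Matrix.single k l 1)
      = ((d : ℂ) / Fintype.card G) • ∑ g : G, conj (gMat g k l) • gMat g := by
        simp only [coeffSum_apply, trace_single_mul_star_gMat, gMatHom_apply]
    _ = Matrix.single k l 1 := by
        rw [hG.sum_conj_smul_gMat, smul_smul, div_mul_div_cancel₀ card_ne_zero,
          div_self d_ne_zero, one_smul]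

theorem coeffSum_mul (hG : IsUnitaryOneDesign G) (ρ : G →* R)
    (A B : Matrix (Fin d) (Fin d) ℂ) :
    coeffSum ρ A * coeffSum ρ B = coeffSum ρ (A * B) := by
  calc coeffSum ρ A * coeffSum ρ B
      = ((d : ℂ) / Fintype.card G) •
          ∑ g : G, (A * star (gMat g)).trace • coeffSum ρ (gMat g * B) := by
        simp only [coeffSum_apply ρ A, smul_mul_assoc, Finset.sum_mul, map_mul_coeffSum]
    _ = coeffSum ρ (coeffSum (gMatHom G) A * B) := by
        simp only [coeffSum_apply (gMatHom G) A, gMatHom_apply, smul_mul_assoc, Finset.sum_mul,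
          map_smul, map_sum]
    _ = coeffSum ρ (A * B) := by rw [hG.coeffSum_gMatHom, LinearMap.id_apply]

end IsUnitaryOneDesign

theorem piG_eq_coeffSum [NeZero d] {H_P : Type*} [NormedAddCommGroup H_P]
    [InnerProductSpace ℂ H_P] [CompleteSpace H_P] (ρ : G →* unitary (H_P →L[ℂ] H_P)) :
    PiG G ρ = coeffSum ((unitary (H_P →L[ℂ] H_P)).subtype.comp ρ) (Matrix.single 0 0 1) := by
  simp only [PiG, coeffSum_apply, trace_single_mul_star_gMat, MonoidHom.comp_apply,
    Submonoid.subtype_apply]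

theorem piG_idempotent_general (hG : IsUnitaryOneDesign G) (ρ : G →* R)
    {A : Matrix (Fin d) (Fin d) ℂ} (hA : IsIdempotentElem A) :
    IsIdempotentElem (coeffSum ρ A) := by
  rw [IsIdempotentElem, hG.coeffSum_mul, hA.eq]

end CoeffSum

/-- If `G` is a unitary 1-design, then `Π_G` is idempotent. -/
theorem piG_idempotent (d : ℕ) [NeZero d]
    (G : Subgroup (Matrix.unitaryGroup (Fin d) ℂ)) [Fintype G]
    {H_P : Type*} [NormedAddCommGroup H_P] [InnerProductSpace ℂ H_P] [CompleteSpace H_P]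
    (ρ : G →* unitary (H_P →L[ℂ] H_P))
    (hdesign : IsUnitaryOneDesign G) :
    PiG G ρ ^ 2 = PiG G ρ := by
  rw [piG_eq_coeffSum, sq]
  exact piG_idempotent_general hdesign _ (by simp [IsIdempotentElem])

end
end

section
/- Suppose G is a unitary 1-design and |Φ⟩ ∈ H_P satisfies Π_G|Φ⟩ ≠ 0. Set |0̄⟩ := Π_G|Φ⟩ / ‖Π_G|Φ⟩‖. Then for every g ∈ G, the overlap ⟨0̄|ρ(g)|0̄⟩ equals the matrix element ⟨0|g|0⟩ (the (0,0) entry of the matrix g). -/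
open scoped ComplexConjugate ComplexInnerProductSpace

noncomputable section

/-!
The operators `E i j = (d/|G|) ∑ g, conj (g i j) • ρ g` are the matrix units attached to the
defining representation of `G`: reindexing the sum gives `ρ g * E i j = ∑ k, g k i • E k j`, and
the 1-design property is Schur orthogonality of the matrix coefficients, whence
`E i j * E k l = δ j k • E i l`. Together with `star (E i j) = E j i` this yields
`star (E i j) * ρ g * E i j = g i i • E j j`, so the overlap of `E i j Φ` with its translate by
`ρ g` is `g i i` times a factor independent of `g`; taking `g = 1` shows the factor is
`‖E i j Φ‖ ^ 2`. The operator `Π_G` is `E 0 0`.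
-/

section SchurOrthogonality

variable {d : ℕ} {G : Subgroup (Matrix.unitaryGroup (Fin d) ℂ)}

theorem gMat_one : gMat (1 : G) = 1 := rfl

theorem gMat_mul (g h : G) : gMat (g * h) = gMat g * gMat h := rfl

theorem gMat_inv (g : G) : gMat g⁻¹ = star (gMat g) := rfl

theorem conj_gMat_inv_apply (g : G) (i j : Fin d) : conj (gMat g⁻¹ i j) = gMat g j i := by
  simp [gMat_inv, Matrix.star_apply]

theorem conj_gMat_inv_mul_apply (g h : G) (i j : Fin d) :
    conj (gMat (g⁻¹ * h) i j) = ∑ k, gMat g k i * conj (gMat h k j) := by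
  simp only [gMat_mul, Matrix.mul_apply, map_sum, map_mul, conj_gMat_inv_apply]

theorem IsUnitaryOneDesign.sum_gMat_mul_conj_gMat [Fintype G] (hG : IsUnitaryOneDesign G)
    (i j k l : Fin d) :
    (d / Fintype.card G : ℂ) * ∑ g : G, gMat g i j * conj (gMat g k l) =
      if i = k ∧ j = l then 1 else 0 := by
  have hd : (d : ℂ) ≠ 0 := Nat.cast_ne_zero.mpr i.pos.ne'
  have entry (g : G) : (gMat g * Matrix.single j l (1 : ℂ) * star (gMat g)) i k =
      gMat g i j * conj (gMat g k l) := by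
    simp [Matrix.mul_apply, Matrix.single_apply, Matrix.star_apply, ite_and]
  have average : (Fintype.card G : ℂ)⁻¹ * ∑ g : G, gMat g i j * conj (gMat g k l) =
      (Matrix.single j l (1 : ℂ)).trace / d * (1 : Matrix (Fin d) (Fin d) ℂ) i k := by
    simpa only [Matrix.smul_apply, Matrix.sum_apply, entry, smul_eq_mul] using
      congrFun₂ (hG (Matrix.single j l 1)) i k
  rw [div_eq_mul_inv, mul_assoc, average]
  by_cases hjl : j = l <;> by_cases hik : i = k <;> simp [hjl, hik, hd, Matrix.one_apply]

end SchurOrthogonality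

section MatrixUnit

variable {d : ℕ} {G : Subgroup (Matrix.unitaryGroup (Fin d) ℂ)} [Fintype G]
  {A : Type*} [Ring A] [StarRing A] [Algebra ℂ A]

/-- The `(i, j)` matrix unit `(d/|G|) ∑ g, conj (g i j) • ρ g` attached to the representation of `G`
on `ℂ^d`. When `ρ` acts on a Hilbert space and `G` is a 1-design, it carries the copies of the
basis vector `e j` to the corresponding copies of `e i`. The values of `ρ` lie in an arbitrary
star algebra because the multiplication rules need nothing more. -/
def matrixUnit (ρ : G →* unitary A) (i j : Fin d) : A :=
  (d / Fintype.card G : ℂ) • ∑ g : G, conj (gMat g i j) • (ρ g : A)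

theorem coe_mul_matrixUnit (ρ : G →* unitary A) (g : G) (i j : Fin d) :
    (ρ g : A) * matrixUnit ρ i j = ∑ k, gMat g k i • matrixUnit ρ k j := by
  have translate : (ρ g : A) * ∑ h : G, conj (gMat h i j) • (ρ h : A) =
      ∑ h : G, conj (gMat (g⁻¹ * h) i j) • (ρ h : A) := by
    rw [Finset.mul_sum]
    exact Fintype.sum_equiv (Equiv.mulLeft g) _ _ fun h ↦ by simp
  simp_rw [matrixUnit, mul_smul_comm, translate, conj_gMat_inv_mul_apply, Finset.sum_smul,
    mul_smul]
  rw [Finset.sum_comm]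
  simp_rw [← Finset.smul_sum, smul_comm (gMat g _ i), ← Finset.smul_sum]

theorem matrixUnit_mul_matrixUnit (hG : IsUnitaryOneDesign G) (ρ : G →* unitary A)
    (i j k l : Fin d) :
    matrixUnit ρ i j * matrixUnit ρ k l = if j = k then matrixUnit ρ i l else 0 := by
  calc
    matrixUnit ρ i j * matrixUnit ρ k l
      = (d / Fintype.card G : ℂ) •
          ∑ g : G, conj (gMat g i j) • ∑ m, gMat g m k • matrixUnit ρ m l := by
        simp_rw [← coe_mul_matrixUnit, matrixUnit.eq_def ρ i j, smul_mul_assoc, Finset.sum_mul,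
          smul_mul_assoc]
    _ = ∑ m, ((d / Fintype.card G : ℂ) * ∑ g : G, gMat g m k * conj (gMat g i j)) •
          matrixUnit ρ m l := by
        simp_rw [Finset.smul_sum, Finset.mul_sum, Finset.sum_smul, smul_smul]
        rw [Finset.sum_comm]
        simp only [mul_comm]
    _ = if j = k then matrixUnit ρ i l else 0 := by
        simp [hG.sum_gMat_mul_conj_gMat, ite_and, eq_comm]

theorem star_matrixUnit [StarModule ℂ A] (ρ : G →* unitary A) (i j : Fin d) :
    star (matrixUnit ρ i j) = matrixUnit ρ j i := by
  have star_term (g : G) : star (conj (gMat g i j) • (ρ g : A)) =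
      conj (gMat g⁻¹ j i) • (ρ g⁻¹ : A) := by
    rw [conj_gMat_inv_apply, map_inv, ← Unitary.star_eq_inv, Unitary.coe_star, star_smul,
      starRingEnd_apply, star_star]
  simp only [matrixUnit, star_smul, star_sum, star_term]
  congr 1
  · simp
  · exact Equiv.sum_comp (Equiv.inv G) fun g ↦ conj (gMat g j i) • (ρ g : A)

theorem star_matrixUnit_mul_coe_mul_matrixUnit [StarModule ℂ A] (hG : IsUnitaryOneDesign G)
    (ρ : G →* unitary A) (g : G) (i j k l : Fin d) :
    star (matrixUnit ρ i j) * (ρ g * matrixUnit ρ k l) = gMat g i k • matrixUnit ρ j l := by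
  simp [star_matrixUnit, coe_mul_matrixUnit, Finset.mul_sum, matrixUnit_mul_matrixUnit hG]

end MatrixUnit

section Overlap

variable {d : ℕ} {G : Subgroup (Matrix.unitaryGroup (Fin d) ℂ)} [Fintype G]
  {H : Type*} [NormedAddCommGroup H] [InnerProductSpace ℂ H] [CompleteSpace H]

theorem inner_matrixUnit_apply_coe_matrixUnit_apply (hG : IsUnitaryOneDesign G)
    (ρ : G →* unitary (H →L[ℂ] H)) (g : G) (i j k l : Fin d) (x y : H) :
    ⟪matrixUnit ρ i j x, (ρ g : H →L[ℂ] H) (matrixUnit ρ k l y)⟫ =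
      gMat g i k * ⟪x, matrixUnit ρ j l y⟫ := by
  rw [← ContinuousLinearMap.adjoint_inner_right, ← ContinuousLinearMap.star_eq_adjoint,
    ← mul_apply_eq_comp, ← mul_apply_eq_comp, mul_assoc,
    star_matrixUnit_mul_coe_mul_matrixUnit hG, smul_apply, inner_smul_right]

theorem norm_matrixUnit_apply_sq (hG : IsUnitaryOneDesign G) (ρ : G →* unitary (H →L[ℂ] H))
    (i j : Fin d) (x : H) :
    (‖matrixUnit ρ i j x‖ : ℂ) ^ 2 = ⟪x, matrixUnit ρ j j x⟫ := by
  simpa [gMat_one] using inner_matrixUnit_apply_coe_matrixUnit_apply hG ρ 1 i j i j x x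

theorem overlap_eq_matrix_element_general (hG : IsUnitaryOneDesign G)
    (ρ : G →* unitary (H →L[ℂ] H)) (i j : Fin d) (Φ : H) (hΦ : matrixUnit ρ i j Φ ≠ 0)
    (ψ : H) (hψ : ψ = (‖matrixUnit ρ i j Φ‖ : ℂ)⁻¹ • matrixUnit ρ i j Φ) (g : G) :
    ⟪ψ, (ρ g : H →L[ℂ] H) ψ⟫ = gMat g i i := by
  have hnorm : (‖matrixUnit ρ i j Φ‖ : ℂ) ≠ 0 := by simpa using hΦ
  rw [hψ, map_smul, inner_smul_left, inner_smul_right,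
    inner_matrixUnit_apply_coe_matrixUnit_apply hG, ← norm_matrixUnit_apply_sq hG ρ i j,
    map_inv₀, Complex.conj_ofReal]
  field_simp

end Overlap

theorem PiG_eq_matrixUnit {d : ℕ} [NeZero d] (G : Subgroup (Matrix.unitaryGroup (Fin d) ℂ))
    [Fintype G] {H : Type*} [NormedAddCommGroup H] [InnerProductSpace ℂ H] [CompleteSpace H]
    (ρ : G →* unitary (H →L[ℂ] H)) : PiG G ρ = matrixUnit ρ 0 0 := rfl

/-- If `G` is a unitary 1-design and `Π_G|Φ⟩ ≠ 0`, with `|0̄⟩ := Π_G|Φ⟩/‖Π_G|Φ⟩‖`,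
then `⟨0̄|ρ(g)|0̄⟩ = ⟨0|g|0⟩` for every `g ∈ G`. -/
theorem overlap_eq_matrix_element (d : ℕ) [NeZero d]
    (G : Subgroup (Matrix.unitaryGroup (Fin d) ℂ)) [Fintype G]
    {H_P : Type*} [NormedAddCommGroup H_P] [InnerProductSpace ℂ H_P] [CompleteSpace H_P]
    (ρ : G →* unitary (H_P →L[ℂ] H_P))
    (hdesign : IsUnitaryOneDesign G)
    (Φ : H_P) (hΦ : PiG G ρ Φ ≠ 0)
    (zerobar : H_P) (hzerobar : zerobar = (‖PiG G ρ Φ‖ : ℂ)⁻¹ • PiG G ρ Φ) :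
    ∀ g : G, ⟪zerobar, (ρ g : H_P →L[ℂ] H_P) zerobar⟫ = gMat g 0 0 := by
  rw [PiG_eq_matrixUnit] at hΦ hzerobar
  exact overlap_eq_matrix_element_general hdesign ρ 0 0 Φ hΦ zerobar hzerobar

end
end

section
/- Suppose G is a unitary 1-design, that g_0, …, g_{d-1} ∈ G are such that the vectors |i⟩ := g_i|0⟩ form an orthonormal basis of ℂ^d, and that |Φ⟩ ∈ H_P satisfies Π_G|Φ⟩ ≠ 0. Define |ī⟩ := N ∑_{g∈G} ⟨0|g†|i⟩ ρ(g)|Φ⟩ with N = (d/|G|)/‖Π_G|Φ⟩‖. Then for all i, j ∈ {0,…,d−1} and all g ∈ G, the physical matrix element ⟨ī|ρ(g)|j̄⟩ equals the logical matrix element ⟨i|g|j⟩. -/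
open scoped ComplexConjugate ComplexInnerProductSpace

noncomputable section

/-!
The encoder `v ↦ ∑ g, ⟪π g e, v⟫ • ρ g Φ` intertwines the defining representation `π` of `G` with
`ρ`, as reindexing the sum shows. If `T` is any intertwiner then `T† T` commutes with `π`, and for a
1-design averaging such an operator over `G` shows that it is a scalar. Hence `T` preserves inner
products up to a constant, which is read off from a single nonzero vector. The normalization `N` is
the one for which the encoder sends `|0⟩` to the unit vector `Π_G|Φ⟩ / ‖Π_G|Φ⟩‖`.
-/

section UnitaryRepresentations

variable {𝕜 G V H : Type*} [RCLike 𝕜]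
  [NormedAddCommGroup V] [InnerProductSpace 𝕜 V] [CompleteSpace V]
  [NormedAddCommGroup H] [InnerProductSpace 𝕜 H] [CompleteSpace H]

section Monoid

variable [Monoid G]

/-- A unitary representation has scalar commutant if the only bounded operators commuting with it
are the scalars. This is the conclusion of Schur's lemma for irreducible representations, taken as
the working form of irreducibility. -/
def HasScalarCommutant (π : G →* unitary (V →L[𝕜] V)) : Prop :=
  ∀ A : V →L[𝕜] V, (∀ g, Commute A (π g : V →L[𝕜] V)) → ∃ c : 𝕜, A = c • 1

/-- A bounded operator `T` intertwines the unitary representations `π` and `ρ`. -/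
def Intertwines (π : G →* unitary (V →L[𝕜] V)) (ρ : G →* unitary (H →L[𝕜] H))
    (T : V →L[𝕜] H) : Prop :=
  ∀ g v, T ((π g : V →L[𝕜] V) v) = (ρ g : H →L[𝕜] H) (T v)

variable {π : G →* unitary (V →L[𝕜] V)} {ρ : G →* unitary (H →L[𝕜] H)} {T : V →L[𝕜] H}

namespace Intertwines

theorem smul (hT : Intertwines π ρ T) (c : 𝕜) : Intertwines π ρ (c • T) := fun g v => by
  simp only [smul_apply, hT g v, map_smul]

theorem commute_adjoint_comp_self (hT : Intertwines π ρ T) (g : G) :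
    Commute (T.adjoint ∘L T) (π g : V →L[𝕜] V) := by
  ext v
  refine ext_inner_right 𝕜 fun w => ?_
  obtain ⟨u, rfl⟩ : ∃ u, (π g : V →L[𝕜] V) u = w :=
    (Unitary.linearIsometryEquiv (π g)).surjective w
  simp only [mul_apply_eq_comp, ContinuousLinearMap.comp_apply,
    ContinuousLinearMap.adjoint_inner_left, Unitary.inner_map_map, hT g]

theorem exists_inner_map_map_eq_mul (hπ : HasScalarCommutant π) (hT : Intertwines π ρ T) :
    ∃ c : 𝕜, ∀ v w, inner 𝕜 (T v) (T w) = c * inner 𝕜 v w := by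
  obtain ⟨c, hc⟩ := hπ (T.adjoint ∘L T) hT.commute_adjoint_comp_self
  refine ⟨c, fun v w => ?_⟩
  calc inner 𝕜 (T v) (T w) = inner 𝕜 v ((T.adjoint ∘L T) w) :=
        (T.adjoint_inner_right v (T w)).symm
    _ = c * inner 𝕜 v w := by rw [hc]; exact inner_smul_right v w c

theorem inner_map_map (hπ : HasScalarCommutant π) (hT : Intertwines π ρ T) {e : V} (he : e ≠ 0)
    (hTe : ‖T e‖ = ‖e‖) (v w : V) : inner 𝕜 (T v) (T w) = inner 𝕜 v w := by
  obtain ⟨c, hc⟩ := exists_inner_map_map_eq_mul hπ hT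
  have c_eq_one : c = 1 := by
    refine mul_right_cancel₀ (inner_self_ne_zero (𝕜 := 𝕜).mpr he) ?_
    rw [← hc, inner_self_eq_norm_sq_to_K, hTe, inner_self_eq_norm_sq_to_K, one_mul]
  rw [hc, c_eq_one, one_mul]

end Intertwines

variable [Fintype G]

/-- The unnormalized encoder `v ↦ ∑ g, ⟪π g e, v⟫ • ρ g Φ`, i.e. the average over `G` of the rank
one operator `|Φ⟩⟨e|`, without the factor `1 / |G|`. -/
def encoder (π : G →* unitary (V →L[𝕜] V)) (ρ : G →* unitary (H →L[𝕜] H)) (e : V) (Φ : H) :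
    V →L[𝕜] H :=
  ∑ g, InnerProductSpace.rankOne 𝕜 ((ρ g : H →L[𝕜] H) Φ) ((π g : V →L[𝕜] V) e)

theorem encoder_apply (π : G →* unitary (V →L[𝕜] V)) (ρ : G →* unitary (H →L[𝕜] H))
    (e : V) (Φ : H) (v : V) :
    encoder π ρ e Φ v =
      ∑ g, inner 𝕜 ((π g : V →L[𝕜] V) e) v • (ρ g : H →L[𝕜] H) Φ := by
  simp only [encoder, sum_apply, InnerProductSpace.rankOne_apply]

end Monoid

theorem intertwines_encoder [Group G] [Fintype G]
    (π : G →* unitary (V →L[𝕜] V)) (ρ : G →* unitary (H →L[𝕜] H))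
    (e : V) (Φ : H) : Intertwines π ρ (encoder π ρ e Φ) := fun h v => by
  rw [encoder_apply, encoder_apply, map_sum, ← Equiv.sum_comp (Equiv.mulLeft h)]
  simp only [Equiv.coe_mulLeft, map_mul, Submonoid.coe_mul, mul_apply_eq_comp,
    Unitary.inner_map_map, map_smul]

end UnitaryRepresentations

section UnitaryOneDesigns

variable {d : ℕ} {G : Subgroup (Matrix.unitaryGroup (Fin d) ℂ)}

/-- The defining representation of a matrix group `G ≤ U(d)` on the Hilbert space `ℂ^d`; its
operators are the maps `gAct g`. -/
def definingRep (G : Subgroup (Matrix.unitaryGroup (Fin d) ℂ)) :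
    G →* unitary (EuclideanSpace ℂ (Fin d) →L[ℂ] EuclideanSpace ℂ (Fin d)) where
  toFun g := ⟨Matrix.toEuclideanCLM (n := Fin d) (𝕜 := ℂ) (gMat g), Unitary.map_mem _ g.1.2⟩
  map_one' := Subtype.ext (map_one Matrix.toEuclideanCLM)
  map_mul' g h := Subtype.ext (map_mul Matrix.toEuclideanCLM (gMat g) (gMat h))

theorem coe_definingRep (g : G) :
    (definingRep G g : EuclideanSpace ℂ (Fin d) →L[ℂ] EuclideanSpace ℂ (Fin d)) =
      Matrix.toEuclideanCLM (n := Fin d) (𝕜 := ℂ) (gMat g) :=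
  rfl

theorem definingRep_apply (g : G) (v : EuclideanSpace ℂ (Fin d)) :
    (definingRep G g : EuclideanSpace ℂ (Fin d) →L[ℂ] EuclideanSpace ℂ (Fin d)) v = gAct g v :=
  rfl

theorem norm_e0 [NeZero d] : ‖e0 d‖ = 1 := by
  simp [e0]

theorem inner_gAct_e0_e0 [NeZero d] (g : G) : ⟪gAct g (e0 d), e0 d⟫ = conj (gMat g 0 0) := by
  simp [gAct, e0, Matrix.toLpLin_apply, EuclideanSpace.inner_single_right]

namespace IsUnitaryOneDesign

variable [Fintype G]

theorem eq_smul_one_of_commute (hG : IsUnitaryOneDesign G) {A : Matrix (Fin d) (Fin d) ℂ}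
    (hA : ∀ g : G, Commute A (gMat g)) : A = (A.trace / d) • 1 := by
  have conj_eq_self (g : G) : gMat g * A * star (gMat g) = A := by
    rw [← (hA g).eq, mul_assoc, gMat, Unitary.mul_star_self_of_mem (Subtype.prop _), mul_one]
  have average_eq_self :
      (Fintype.card G : ℂ)⁻¹ • ∑ g : G, gMat g * A * star (gMat g) = A := by
    simp only [conj_eq_self, Finset.sum_const, Finset.card_univ, ← Nat.cast_smul_eq_nsmul ℂ]
    exact inv_smul_smul₀ (Nat.cast_ne_zero.mpr Fintype.card_ne_zero) A
  rw [← hG A, average_eq_self]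

theorem hasScalarCommutant_definingRep (hG : IsUnitaryOneDesign G) :
    HasScalarCommutant (definingRep G) := fun A hA => by
  obtain ⟨M, rfl⟩ := EquivLike.surjective (Matrix.toEuclideanCLM (n := Fin d) (𝕜 := ℂ)) A
  have M_commute (g : G) : Commute M (gMat g) := by
    refine Commute.of_map (f := Matrix.toEuclideanCLM (n := Fin d) (𝕜 := ℂ))
      (EquivLike.injective _) ?_
    rw [← coe_definingRep]
    exact hA g
  refine ⟨M.trace / d, ?_⟩
  conv_lhs => rw [hG.eq_smul_one_of_commute M_commute, map_smul, map_one]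

end IsUnitaryOneDesign

variable [NeZero d] [Fintype G]
  {H_P : Type*} [NormedAddCommGroup H_P] [InnerProductSpace ℂ H_P] [CompleteSpace H_P]

theorem PiG_apply (ρ : G →* unitary (H_P →L[ℂ] H_P)) (Φ : H_P) :
    PiG G ρ Φ =
      ((d : ℂ) / (Fintype.card G : ℂ)) • encoder (definingRep G) ρ (e0 d) Φ (e0 d) := by
  simp only [PiG, encoder_apply, definingRep_apply, inner_gAct_e0_e0, sum_apply,
    smul_apply]

theorem physical_matrix_elements_general (ρ : G →* unitary (H_P →L[ℂ] H_P))
    (hdesign : IsUnitaryOneDesign G) {Φ : H_P} (hΦ : PiG G ρ Φ ≠ 0)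
    (v w : EuclideanSpace ℂ (Fin d)) (g : G) :
    ⟪(((d : ℂ) / (Fintype.card G : ℂ)) / (‖PiG G ρ Φ‖ : ℂ)) •
        ∑ h : G, ⟪gAct h (e0 d), v⟫ • (ρ h : H_P →L[ℂ] H_P) Φ,
      (ρ g : H_P →L[ℂ] H_P) ((((d : ℂ) / (Fintype.card G : ℂ)) / (‖PiG G ρ Φ‖ : ℂ)) •
        ∑ h : G, ⟪gAct h (e0 d), w⟫ • (ρ h : H_P →L[ℂ] H_P) Φ)⟫ =
      ⟪v, gAct g w⟫ := by
  set N : ℂ := ((d : ℂ) / (Fintype.card G : ℂ)) / (‖PiG G ρ Φ‖ : ℂ) with hN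
  set T := N • encoder (definingRep G) ρ (e0 d) Φ with hT
  have T_apply (u : EuclideanSpace ℂ (Fin d)) :
      T u = N • ∑ h : G, ⟪gAct h (e0 d), u⟫ • (ρ h : H_P →L[ℂ] H_P) Φ := by
    simp only [hT, smul_apply, encoder_apply, definingRep_apply]
  have T_intertwines : Intertwines (definingRep G) ρ T :=
    (intertwines_encoder (definingRep G) ρ (e0 d) Φ).smul N
  have T_e0 : T (e0 d) = (‖PiG G ρ Φ‖ : ℂ)⁻¹ • PiG G ρ Φ := by
    rw [hT, smul_apply, hN, div_eq_inv_mul, mul_smul, ← PiG_apply]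
  have norm_T_e0 : ‖T (e0 d)‖ = ‖e0 d‖ := by
    rw [T_e0, norm_e0]
    exact norm_smul_inv_norm hΦ
  have e0_ne_zero : e0 d ≠ 0 := norm_ne_zero_iff.mp (by simp [norm_e0])
  rw [← T_apply, ← T_apply, ← T_intertwines, definingRep_apply]
  exact T_intertwines.inner_map_map hdesign.hasScalarCommutant_definingRep e0_ne_zero norm_T_e0 _ _

end UnitaryOneDesigns

/-- With the encoding `|ī⟩ := N ∑_g ⟨0|g†|i⟩ ρ(g)|Φ⟩`, `N = (d/|G|)/‖Π_G|Φ⟩‖`, physical matrix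
elements equal logical matrix elements: `⟨ī|ρ(g)|j̄⟩ = ⟨i|g|j⟩`. -/
theorem physical_matrix_elements (d : ℕ) [NeZero d]
    (G : Subgroup (Matrix.unitaryGroup (Fin d) ℂ)) [Fintype G]
    {H_P : Type*} [NormedAddCommGroup H_P] [InnerProductSpace ℂ H_P] [CompleteSpace H_P]
    (ρ : G →* unitary (H_P →L[ℂ] H_P))
    (hdesign : IsUnitaryOneDesign G)
    (gs : Fin d → G)
    (hbasis : Orthonormal ℂ (fun i : Fin d => gAct (gs i) (e0 d)))
    (Φ : H_P) (hΦ : PiG G ρ Φ ≠ 0)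
    (ibar : Fin d → H_P)
    (hibar : ∀ i : Fin d,
      ibar i = (((d : ℂ) / (Fintype.card G : ℂ)) / (‖PiG G ρ Φ‖ : ℂ)) •
        ∑ g : G, ⟪gAct g (e0 d), gAct (gs i) (e0 d)⟫ • ((ρ g : H_P →L[ℂ] H_P) Φ)) :
    ∀ (i j : Fin d) (g : G),
      ⟪ibar i, (ρ g : H_P →L[ℂ] H_P) (ibar j)⟫ =
        ⟪gAct (gs i) (e0 d), gAct g (gAct (gs j) (e0 d))⟫ := by
  intro i j g
  simpa only [hibar] using physical_matrix_elements_general ρ hdesign hΦ _ _ g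

end
end

section
/- Suppose G is a unitary 1-design and E' : ℂ^d → H_P is a linear map satisfying E'(g|ψ⟩) = ρ(g) E'(|ψ⟩) for all g ∈ G and all |ψ⟩ ∈ ℂ^d. Then Π_G E'(|0⟩) = E'(|0⟩), i.e. the vector E'(|0⟩) is fixed by the projector Π_G. -/
open scoped ComplexConjugate ComplexInnerProductSpace

noncomputable section

/-!
Averaging `|χ⟩⟨ψ|` over the 1-design and applying the result to `φ` gives the reconstruction formula
`(d/|G|) ∑ g, ⟨gψ|φ⟩ g|χ⟩ = ⟨ψ|χ⟩ |φ⟩`. An equivariant linear map turns each `g|χ⟩` into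
`ρ(g) E'|χ⟩`, and for `ψ = φ = χ = |0⟩` the left-hand side is then `Π_G E'|0⟩`.
-/

theorem mul_vecMulVec_star_mul_conjTranspose_mulVec {m n R : Type*} [Fintype m] [Fintype n]
    [CommSemiring R] [StarRing R] (U : Matrix m n R) (ψ χ : n → R) (φ : m → R) :
    (U * Matrix.vecMulVec χ (star ψ) * U.conjTranspose).mulVec φ =
      (star (U.mulVec ψ) ⬝ᵥ φ) • U.mulVec χ := by
  rw [Matrix.mul_vecMulVec, Matrix.vecMulVec_mul, Matrix.vecMulVec_mulVec,
    ← Matrix.star_mulVec, op_smul_eq_smul]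

section UnitarySubgroup

variable {d : ℕ} {G : Subgroup (Matrix.unitaryGroup (Fin d) ℂ)}

variable [Fintype G]

theorem IsUnitaryOneDesign.sum_inner_gAct_smul_gAct [NeZero d] (hG : IsUnitaryOneDesign G)
    (ψ χ φ : EuclideanSpace ℂ (Fin d)) :
    ((d : ℂ) / Fintype.card G) • ∑ g : G, ⟪gAct g ψ, φ⟫ • gAct g χ = ⟪ψ, χ⟫ • φ := by
  have hd : (d : ℂ) ≠ 0 := Nat.cast_ne_zero.mpr (NeZero.ne d)
  have twirl : (Fintype.card G : ℂ)⁻¹ •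
      ∑ g : G, (star ((gMat g).mulVec ψ) ⬝ᵥ φ) • (gMat g).mulVec χ =
        ((star ψ ⬝ᵥ χ) / d) • (φ : Fin d → ℂ) := by
    simpa only [Matrix.smul_mulVec, Matrix.sum_mulVec, Matrix.star_eq_conjTranspose,
      mul_vecMulVec_star_mul_conjTranspose_mulVec, Matrix.trace_vecMulVec, Matrix.one_mulVec,
      dotProduct_comm (χ : Fin d → ℂ)]
      using congrArg (·.mulVec φ) (hG (Matrix.vecMulVec χ (star ψ)))
  apply WithLp.ofLp_injective 2
  calc _ = (d : ℂ) • (Fintype.card G : ℂ)⁻¹ •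
        ∑ g : G, (star ((gMat g).mulVec ψ) ⬝ᵥ φ) • (gMat g).mulVec χ := by
        simp [gAct, Matrix.toLpLin_apply, EuclideanSpace.inner_eq_star_dotProduct, smul_smul,
          div_eq_mul_inv, dotProduct_comm]
    _ = (star ψ ⬝ᵥ χ) • (φ : Fin d → ℂ) := by rw [twirl, smul_smul, mul_div_cancel₀ _ hd]
    _ = _ := by simp [EuclideanSpace.inner_eq_star_dotProduct, dotProduct_comm]

theorem PiG_apply_s7 [NeZero d] {H_P : Type*} [NormedAddCommGroup H_P] [InnerProductSpace ℂ H_P]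
    [CompleteSpace H_P] (ρ : G →* unitary (H_P →L[ℂ] H_P)) (v : H_P) :
    PiG G ρ v = ((d : ℂ) / Fintype.card G) •
      ∑ g : G, ⟪gAct g (e0 d), e0 d⟫ • (ρ g : H_P →L[ℂ] H_P) v := by
  simp [PiG, inner_gAct_e0_e0]

theorem piG_fixes_encoded_zero_general [NeZero d] {V : Type*} [AddCommMonoid V] [Module ℂ V]
    (ρ : G → V → V) (hdesign : IsUnitaryOneDesign G) (E' : EuclideanSpace ℂ (Fin d) →ₗ[ℂ] V)
    (hequiv : ∀ (g : G) (ψ : EuclideanSpace ℂ (Fin d)), E' (gAct g ψ) = ρ g (E' ψ))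
    (ψ χ φ : EuclideanSpace ℂ (Fin d)) :
    ((d : ℂ) / Fintype.card G) • ∑ g : G, ⟪gAct g ψ, φ⟫ • ρ g (E' χ) = ⟪ψ, χ⟫ • E' φ := by
  simpa only [map_smul, map_sum, hequiv] using
    congrArg E' (hdesign.sum_inner_gAct_smul_gAct ψ χ φ)

end UnitarySubgroup

/-- For any `G`-equivariant linear encoding `E'`, the vector `E'(|0⟩)` is fixed by `Π_G`. -/
theorem piG_fixes_encoded_zero (d : ℕ) [NeZero d]
    (G : Subgroup (Matrix.unitaryGroup (Fin d) ℂ)) [Fintype G]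
    {H_P : Type*} [NormedAddCommGroup H_P] [InnerProductSpace ℂ H_P] [CompleteSpace H_P]
    (ρ : G →* unitary (H_P →L[ℂ] H_P))
    (hdesign : IsUnitaryOneDesign G)
    (E' : EuclideanSpace ℂ (Fin d) →ₗ[ℂ] H_P)
    (hequiv : ∀ (g : G) (ψ : EuclideanSpace ℂ (Fin d)),
      E' (gAct g ψ) = (ρ g : H_P →L[ℂ] H_P) (E' ψ)) :
    PiG G ρ (E' (e0 d)) = E' (e0 d) := by
  simpa [PiG_apply_s7, e0] using
    piG_fixes_encoded_zero_general (fun g ↦ (ρ g : H_P →L[ℂ] H_P)) hdesign E' hequiv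
      (e0 d) (e0 d) (e0 d)

end
end

section
/- Suppose the scalar matrix z·1 belongs to G for some complex number z with |z| = 1, and suppose ρ(z·1) = w·Id_{H_P} for some complex scalar w with conj(z)·w ≠ 1. Then Π_G = 0. -/
open scoped ComplexConjugate ComplexInnerProductSpace

noncomputable section

section VanishingSums

variable {R : Type*}

theorem sum_eq_zero_of_apply_perm_eq_smul {ι M : Type*} [Fintype ι] [Ring R] [IsCancelMulZero R]
    [AddCommGroup M] [Module R M] [Module.IsTorsionFree R M] (σ : Equiv.Perm ι) {f : ι → M} {c : R}
    (hc : c ≠ 1) (hf : ∀ i, f (σ i) = c • f i) : ∑ i, f i = 0 := by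
  have sum_eq_smul : ∑ i, f i = c • ∑ i, f i := calc
    ∑ i, f i = ∑ i, f (σ i) := (Equiv.sum_comp σ f).symm
    _ = ∑ i, c • f i := Fintype.sum_congr _ _ hf
    _ = c • ∑ i, f i := Finset.smul_sum.symm
  by_contra sum_ne_zero
  exact hc ((smul_left_inj sum_ne_zero).mp (by rw [one_smul, ← sum_eq_smul]))

variable {G A : Type*} [Group G] [Fintype G] [CommRing R] [IsCancelMulZero R] [Ring A]
  [Algebra R A] [Module.IsTorsionFree R A]

theorem sum_smul_map_eq_zero_of_map_eq_smul_one {φ : G → R} {ρ : G →* A} {u : G} {a b : R}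
    (hφ : ∀ g, φ (u * g) = a * φ g) (hρ : ρ u = b • 1) (hab : a * b ≠ 1) :
    ∑ g, φ g • ρ g = 0 := by
  refine sum_eq_zero_of_apply_perm_eq_smul (Equiv.mulLeft u) hab fun g ↦ ?_
  calc
    φ (u * g) • ρ (u * g) = (a * φ g) • (b • 1 * ρ g) := by rw [hφ, map_mul, hρ]
    _ = (a * b) • φ g • ρ g := by rw [smul_one_mul, smul_smul, smul_smul, mul_right_comm]

theorem piG_eq_zero_general {n : Type*} [Fintype n] [DecidableEq n] [StarRing R]
    (U : G →* Matrix n n R) (ρ : G →* A) {u : G} {z w : R} (hU : U u = z • 1) (hρ : ρ u = w • 1)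
    (hzw : starRingEnd R z * w ≠ 1) (i j : n) :
    ∑ g, starRingEnd R (U g i j) • ρ g = 0 := by
  refine sum_smul_map_eq_zero_of_map_eq_smul_one (fun g ↦ ?_) hρ hzw
  rw [map_mul U, hU, smul_one_mul, Matrix.smul_apply, smul_eq_mul, map_mul]

end VanishingSums

/-- If `z·1 ∈ G` for some unit-modulus `z` and `ρ(z·1) = w·Id` with `conj z · w ≠ 1`,
then `Π_G = 0`. -/
theorem piG_eq_zero (d : ℕ) [NeZero d]
    (G : Subgroup (Matrix.unitaryGroup (Fin d) ℂ)) [Fintype G]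
    {H_P : Type*} [NormedAddCommGroup H_P] [InnerProductSpace ℂ H_P] [CompleteSpace H_P]
    (ρ : G →* unitary (H_P →L[ℂ] H_P))
    (z w : ℂ) (hz : ‖z‖ = 1)
    (u : Matrix.unitaryGroup (Fin d) ℂ)
    (hu : (u : Matrix (Fin d) (Fin d) ℂ) = z • 1)
    (hmem : u ∈ G)
    (hw : ((ρ ⟨u, hmem⟩ : unitary (H_P →L[ℂ] H_P)) : H_P →L[ℂ] H_P) = w • 1)
    (hzw : (starRingEnd ℂ) z * w ≠ 1) :
    PiG G ρ = 0 := by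
  rw [PiG]
  exact smul_eq_zero_of_right _ <|
    piG_eq_zero_general ((Matrix.unitaryGroup (Fin d) ℂ).subtype.comp G.subtype)
      ((unitary (H_P →L[ℂ] H_P)).subtype.comp ρ) (u := ⟨u, hmem⟩) hu hw hzw 0 0

end
end

section
/- Let μ be the Haar probability measure on the compact group SU(2) of 2×2 special unitary complex matrices. For all natural numbers m, n with m + n ≠ 1, and for all x, y ∈ ℂ, the integral ∫_{SU(2)} conj(g₀₀) · (g₀₀·x + g₀₁·y)^m · (g₁₀·x + g₁₁·y)^n dμ(g) equals 0, where g_{ij} denote the matrix entries of g. -/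
open MeasureTheory
open scoped ComplexConjugate

noncomputable section

/-- `SU(2)`: the subgroup of the unitary group `U(2)` of matrices with determinant 1. -/
def SU2 : Subgroup (Matrix.unitaryGroup (Fin 2) ℂ) where
  carrier := {g | (g : Matrix (Fin 2) (Fin 2) ℂ).det = 1}
  one_mem' := by simp
  mul_mem' := by
    intro a b ha hb
    simp only [Set.mem_setOf_eq, Submonoid.coe_mul, Matrix.det_mul] at *
    rw [ha, hb, one_mul]
  inv_mem' := by
    intro a ha
    simp only [Set.mem_setOf_eq] at *
    rw [← Unitary.star_eq_inv]
    show (star (a : Matrix (Fin 2) (Fin 2) ℂ)).det = 1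
    rw [Matrix.star_eq_conjTranspose, Matrix.det_conjTranspose, ha, star_one]

/-- The matrix underlying an element of `SU(2)`. -/
def su2Mat (g : SU2) : Matrix (Fin 2) (Fin 2) ℂ :=
  ((g : Matrix.unitaryGroup (Fin 2) ℂ) : Matrix (Fin 2) (Fin 2) ℂ)

/-!
For vectors `w`, `v` of `ℂ²`, an antilinear form `φ` and a function `P` of degree `d` under scalars
of modulus one, put `J(w, v) = ∫ φ(g w) P(g v) dμ(g)`. Right invariance of `μ` gives
`J(h w, h v) = J(w, v)` for all `h ∈ SU(2)`. Since `SU(2)` moves `v` to a multiple of the first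
basis vector `e₀`, and `J` is antilinear in `w`, only `J(e₀, r e₀)` and `J(e₁, r e₀)` matter. The
torus element `diag(c, c⁻¹)` multiplies them by `c ^ (d - 1)` and `c ^ (d + 1)`, so both vanish
unless `d = ±1`.
-/

theorem isMulRightInvariant_of_compactSpace {G : Type*} [Group G] [TopologicalSpace G]
    [IsTopologicalGroup G] [CompactSpace G] [MeasurableSpace G] [BorelSpace G]
    (μ : Measure G) [μ.IsHaarMeasure] : μ.IsMulRightInvariant where
  map_mul_right_eq_self g := by
    have hsmul := Measure.isMulInvariant_eq_smul_of_compactSpace (μ.map (· * g)) μ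
    have hmass : μ.map (· * g) Set.univ = μ Set.univ := by
      rw [Measure.map_apply (measurable_mul_const g) MeasurableSet.univ, Set.preimage_univ]
    rw [hsmul, Measure.smul_apply, ENNReal.smul_def, smul_eq_mul] at hmass
    have hfactor := (ENNReal.mul_eq_right (NeZero.ne _) (measure_ne_top μ _)).1 hmass
    rw [hsmul, ENNReal.coe_eq_one.1 hfactor, one_smul]

instance compactSpace_unitaryGroup {ι 𝕜 : Type*} [Fintype ι] [DecidableEq ι] [RCLike 𝕜] :
    CompactSpace (Matrix.unitaryGroup ι 𝕜) := by
  have hcompact : IsCompact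
      (Set.univ.pi fun _ ↦ Set.univ.pi fun _ ↦ Metric.closedBall 0 1 : Set (Matrix ι ι 𝕜)) :=
    isCompact_univ_pi fun _ ↦ isCompact_univ_pi fun _ ↦ isCompact_closedBall 0 1
  refine isCompact_iff_compactSpace.1 (hcompact.of_isClosed_subset
    (isClosed_unitary (R := Matrix ι ι 𝕜)) ?_)
  intro U hU i _ j _
  exact mem_closedBall_zero_iff.2 (entry_norm_bound_of_unitary hU i j)

theorem exists_circle_zpow_ne_one {k : ℤ} (hk : k ≠ 0) : ∃ c : Circle, (c : ℂ) ^ k ≠ 1 := by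
  refine ⟨Circle.exp (Real.pi / k), ?_⟩
  rw [← Circle.coe_zpow, ← Circle.exp_zsmul, zsmul_eq_mul,
    mul_div_cancel₀ _ (Int.cast_ne_zero.2 hk)]
  exact mt Circle.coe_eq_one.1 Circle.exp_pi_ne_one

namespace SU2

open scoped Matrix

theorem su2Mat_one : su2Mat 1 = 1 := rfl

theorem su2Mat_mul (g h : SU2) : su2Mat (g * h) = su2Mat g * su2Mat h := rfl

theorem continuous_su2Mat : Continuous su2Mat :=
  continuous_subtype_val.comp continuous_subtype_val

instance : CompactSpace SU2 :=
  isCompact_iff_compactSpace.1 (IsClosed.isCompact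
    (isClosed_eq (f := fun g : Matrix.unitaryGroup (Fin 2) ℂ ↦ g.1.det)
      continuous_subtype_val.matrix_det continuous_const))

/-- The element of `SU(2)` with first column `(a, b)`; every element arises in this way. -/
def ofFirstCol (a b : ℂ) (hab : a * conj a + b * conj b = 1) : SU2 :=
  ⟨⟨!![a, -conj b; b, conj a], by
    rw [Matrix.mem_unitaryGroup_iff]
    ext i j
    fin_cases i <;> fin_cases j <;> simp [Matrix.mul_apply, Matrix.star_apply] <;> grind⟩, by
    change Matrix.det !![a, -conj b; b, conj a] = 1
    rw [Matrix.det_fin_two_of]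
    linear_combination hab⟩

theorem su2Mat_ofFirstCol (a b : ℂ) (hab : a * conj a + b * conj b = 1) :
    su2Mat (ofFirstCol a b hab) = !![a, -conj b; b, conj a] := rfl

/-- The element `diag(c, c⁻¹)` of the standard maximal torus of `SU(2)`. -/
def torus (c : Circle) : SU2 :=
  ofFirstCol c 0 (by simp [Complex.mul_conj])

theorem su2Mat_torus (c : Circle) : su2Mat (torus c) = !![(c : ℂ), 0; 0, (c : ℂ)⁻¹] := by
  rw [torus, su2Mat_ofFirstCol, ← Circle.coe_inv, Circle.coe_inv_eq_conj, map_zero, neg_zero]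

theorem su2Mat_torus_mulVec_fst_axis (c : Circle) (r : ℂ) :
    su2Mat (torus c) *ᵥ ![r, 0] = (c : ℂ) • ![r, 0] := by
  ext i
  fin_cases i <;> simp [su2Mat_torus, mul_comm]

theorem su2Mat_torus_mulVec_snd_axis (c : Circle) (r : ℂ) :
    su2Mat (torus c) *ᵥ ![0, r] = ((c⁻¹ : Circle) : ℂ) • ![0, r] := by
  ext i
  fin_cases i <;> simp [su2Mat_torus, mul_comm]

theorem exists_su2Mat_mulVec_fst_axis_eq (v : Fin 2 → ℂ) :
    ∃ (u : SU2) (r : ℂ), su2Mat u *ᵥ ![r, 0] = v := by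
  obtain rfl | hv := eq_or_ne v 0
  · exact ⟨1, 0, by simp⟩
  set r : ℝ := ‖WithLp.toLp 2 v‖ with hr
  have hr0 : (r : ℂ) ≠ 0 := by simpa [hr] using hv
  have hr_sq : (r : ℂ) ^ 2 = v 0 * conj (v 0) + v 1 * conj (v 1) := by
    rw [Complex.mul_conj', Complex.mul_conj', hr]
    exact_mod_cast by simp [EuclideanSpace.norm_sq_eq]
  have hunit : v 0 / r * conj (v 0 / r) + v 1 / r * conj (v 1 / r) = 1 := by
    simp only [map_div₀, Complex.conj_ofReal]
    field_simp
    exact hr_sq.symm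
  refine ⟨ofFirstCol _ _ hunit, r, ?_⟩
  ext i
  fin_cases i <;> simp [su2Mat_ofFirstCol, mul_div_cancel₀ _ hr0]

section OrbitIntegral

variable [MeasurableSpace SU2]

/-- The function `(w, v) ↦ ∫ φ(g w) P(g v) dμ(g)` on pairs of vectors of `ℂ²`. Keeping the two
vectors apart makes it antilinear in `w` and invariant under simultaneous rotation of `w` and `v`.
-/
def orbitIntegral (μ : Measure SU2) (φ : (Fin 2 → ℂ) →L⋆[ℂ] ℂ) (P : (Fin 2 → ℂ) → ℂ)
    (w v : Fin 2 → ℂ) : ℂ :=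
  ∫ g, φ (su2Mat g *ᵥ w) * P (su2Mat g *ᵥ v) ∂μ

variable {μ : Measure SU2} {φ : (Fin 2 → ℂ) →L⋆[ℂ] ℂ} {P : (Fin 2 → ℂ) → ℂ}

theorem orbitIntegral_smul_left (b : ℂ) (w v : Fin 2 → ℂ) :
    orbitIntegral μ φ P (b • w) v = conj b * orbitIntegral μ φ P w v := by
  simp only [orbitIntegral, Matrix.mulVec_smul, map_smulₛₗ, smul_eq_mul, mul_assoc,
    integral_const_mul]

theorem orbitIntegral_smul_right {d : ℤ} (hP : ∀ (c : Circle) z, P ((c : ℂ) • z) = c ^ d * P z)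
    (c : Circle) (w v : Fin 2 → ℂ) :
    orbitIntegral μ φ P w ((c : ℂ) • v) = c ^ d * orbitIntegral μ φ P w v := by
  simp only [orbitIntegral, Matrix.mulVec_smul, hP, mul_left_comm _ ((c : ℂ) ^ d),
    integral_const_mul]

variable [BorelSpace SU2]

theorem orbitIntegral_add_left [IsFiniteMeasureOnCompacts μ] (hPc : Continuous P)
    (w w' v : Fin 2 → ℂ) :
    orbitIntegral μ φ P (w + w') v = orbitIntegral μ φ P w v + orbitIntegral μ φ P w' v := by
  have hint (w : Fin 2 → ℂ) : Integrable (fun g ↦ φ (su2Mat g *ᵥ w) * P (su2Mat g *ᵥ v)) μ := by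
    have hmulVec (z : Fin 2 → ℂ) : Continuous fun g ↦ su2Mat g *ᵥ z :=
      continuous_su2Mat.matrix_mulVec continuous_const
    have hcont := (φ.continuous.comp (hmulVec w)).mul (hPc.comp (hmulVec v))
    exact hcont.integrable_of_hasCompactSupport (HasCompactSupport.of_compactSpace _)
  simp only [orbitIntegral, Matrix.mulVec_add, map_add, add_mul]
  exact integral_add (hint w) (hint w')

variable [μ.IsMulRightInvariant]

theorem orbitIntegral_mulVec_mulVec (h : SU2) (w v : Fin 2 → ℂ) :
    orbitIntegral μ φ P (su2Mat h *ᵥ w) (su2Mat h *ᵥ v) = orbitIntegral μ φ P w v := by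
  simp only [orbitIntegral, Matrix.mulVec_mulVec, ← su2Mat_mul]
  exact integral_mul_right_eq_self (fun g ↦ φ (su2Mat g *ᵥ w) * P (su2Mat g *ᵥ v)) h

theorem orbitIntegral_eq_zero_of_mulVec_eq_smul {d : ℤ}
    (hP : ∀ (c : Circle) z, P ((c : ℂ) • z) = c ^ d * P z) {h : SU2} {b : ℂ} {c : Circle}
    {w v : Fin 2 → ℂ} (hw : su2Mat h *ᵥ w = b • w) (hv : su2Mat h *ᵥ v = (c : ℂ) • v)
    (hbc : conj b * c ^ d ≠ 1) : orbitIntegral μ φ P w v = 0 := by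
  have hfix : conj b * c ^ d * orbitIntegral μ φ P w v = orbitIntegral μ φ P w v :=
    calc
      _ = orbitIntegral μ φ P (b • w) ((c : ℂ) • v) := by
        rw [orbitIntegral_smul_left, orbitIntegral_smul_right hP, mul_assoc]
      _ = orbitIntegral μ φ P w v := by rw [← hw, ← hv, orbitIntegral_mulVec_mulVec]
  by_contra hne
  exact hbc ((mul_eq_right₀ hne).1 hfix)

theorem orbitIntegral_fst_axis_eq_zero [IsFiniteMeasureOnCompacts μ] {d : ℤ} (hd : d ≠ 1)
    (hd' : d ≠ -1) (hPc : Continuous P) (hP : ∀ (c : Circle) z, P ((c : ℂ) • z) = c ^ d * P z)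
    (w : Fin 2 → ℂ) (r : ℂ) : orbitIntegral μ φ P w ![r, 0] = 0 := by
  have hfirst : orbitIntegral μ φ P ![1, 0] ![r, 0] = 0 := by
    obtain ⟨c, hc⟩ := exists_circle_zpow_ne_one (sub_ne_zero.2 hd)
    refine orbitIntegral_eq_zero_of_mulVec_eq_smul hP (su2Mat_torus_mulVec_fst_axis c 1)
      (su2Mat_torus_mulVec_fst_axis c r) ?_
    rwa [← Circle.coe_inv_eq_conj, Circle.coe_inv, mul_comm, ← zpow_sub_one₀ c.coe_ne_zero]
  have hsecond : orbitIntegral μ φ P ![0, 1] ![r, 0] = 0 := by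
    obtain ⟨c, hc⟩ := exists_circle_zpow_ne_one (mt eq_neg_of_add_eq_zero_left hd')
    refine orbitIntegral_eq_zero_of_mulVec_eq_smul hP (su2Mat_torus_mulVec_snd_axis c 1)
      (su2Mat_torus_mulVec_fst_axis c r) ?_
    rwa [← Circle.coe_inv_eq_conj, inv_inv, mul_comm, ← zpow_add_one₀ c.coe_ne_zero]
  have hw : w = w 0 • ![1, 0] + w 1 • ![0, 1] := by
    ext i
    fin_cases i <;> simp
  rw [hw, orbitIntegral_add_left hPc, orbitIntegral_smul_left, orbitIntegral_smul_left, hfirst,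
    hsecond, mul_zero, mul_zero, add_zero]

theorem orbitIntegral_eq_zero [IsFiniteMeasureOnCompacts μ] {d : ℤ} (hd : d ≠ 1)
    (hd' : d ≠ -1) (hPc : Continuous P) (hP : ∀ (c : Circle) z, P ((c : ℂ) • z) = c ^ d * P z)
    (w v : Fin 2 → ℂ) : orbitIntegral μ φ P w v = 0 := by
  obtain ⟨u, r, rfl⟩ := exists_su2Mat_mulVec_fst_axis_eq v
  have hw : w = su2Mat u *ᵥ su2Mat u⁻¹ *ᵥ w := by
    rw [Matrix.mulVec_mulVec, ← su2Mat_mul, mul_inv_cancel, su2Mat_one, Matrix.one_mulVec]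
  rw [hw, orbitIntegral_mulVec_mulVec, orbitIntegral_fst_axis_eq_zero hd hd' hPc hP]

end OrbitIntegral

end SU2

open scoped Matrix in
theorem haar_integral_eq_zero_general [MeasurableSpace SU2] [BorelSpace SU2]
    (μ : Measure SU2) [μ.IsHaarMeasure] {d : ℤ} (hd : d ≠ 1) (hd' : d ≠ -1)
    (φ : (Fin 2 → ℂ) →L⋆[ℂ] ℂ) {P : (Fin 2 → ℂ) → ℂ} (hPc : Continuous P)
    (hP : ∀ (c : Circle) z, P ((c : ℂ) • z) = c ^ d * P z) (w v : Fin 2 → ℂ) :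
    ∫ g : SU2, φ (su2Mat g *ᵥ w) * P (su2Mat g *ᵥ v) ∂μ = 0 :=
  have := isMulRightInvariant_of_compactSpace μ
  SU2.orbitIntegral_eq_zero hd hd' hPc hP w v

/-- The Haar average over `SU(2)` of `conj(g₀₀)·(g₀₀x+g₀₁y)^m·(g₁₀x+g₁₁y)^n` vanishes
whenever `m + n ≠ 1`. -/
theorem haar_integral_eq_zero [MeasurableSpace SU2] [BorelSpace SU2]
    (μ : Measure SU2) [μ.IsHaarMeasure] [IsProbabilityMeasure μ]
    (m n : ℕ) (hmn : m + n ≠ 1) (x y : ℂ) :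
    ∫ g : SU2, conj (su2Mat g 0 0) *
        (su2Mat g 0 0 * x + su2Mat g 0 1 * y) ^ m *
        (su2Mat g 1 0 * x + su2Mat g 1 1 * y) ^ n ∂μ = 0 := by
  have hP (c : Circle) (z : Fin 2 → ℂ) : ((c : ℂ) • z) 0 ^ m * ((c : ℂ) • z) 1 ^ n =
      (c : ℂ) ^ ((m + n : ℕ) : ℤ) * (z 0 ^ m * z 1 ^ n) := by
    simp only [Pi.smul_apply, smul_eq_mul, zpow_natCast]
    ring
  simpa [Matrix.mulVec, dotProduct, mul_assoc] using
    haar_integral_eq_zero_general μ (d := (m + n : ℕ)) (by lia) (by lia)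
      ((starL ℂ : ℂ ≃L⋆[ℂ] ℂ).toContinuousLinearMap.comp (ContinuousLinearMap.proj 0))
      (P := fun z ↦ z 0 ^ m * z 1 ^ n) (by fun_prop) hP ![1, 0] ![x, y]

end
end

section
/- Let m ≥ 1 be an integer and ω = exp(2πi/m). Then (1/m) ∑_{p=0}^{m−1} ∑_{q=0}^{m−1} ω^{−pq} · (P_ω^p ⊗ P_ω^q) = CP_ω, where P_ω is the 2×2 diagonal matrix diag(1, ω), ⊗ denotes the Kronecker product of 2×2 complex matrices, and CP_ω is the 4×4 diagonal matrix diag(1, 1, 1, ω). -/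
open Matrix
open scoped Kronecker

noncomputable section

/-!
By orthogonality of the characters of `ℤ/m`, the sum over `q` of `ω ^ (-(p * q)) * (ω ^ b) ^ q` is
`m` if `p ≡ b [MOD m]` and `0` otherwise. Hence, if `A ^ m = 1`, the normalized double sum of
`ω ^ (-(p * q)) * (ω ^ b) ^ q` times `A ^ p` is the single power `A ^ b`: on the eigenvector of the
second tensor factor with eigenvalue `ω ^ b`, the first factor is acted on by `A ^ b`, which is a
controlled-`A` gate when `b` ranges over `0, 1`.
-/

section PrimitiveRoot

variable {K : Type*} [Field K] {m : ℕ} {ω : K}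

theorem sum_range_zpow_pow_eq_ite (hω : IsPrimitiveRoot ω m) (k : ℤ) :
    ∑ q ∈ Finset.range m, (ω ^ k) ^ q = if (m : ℤ) ∣ k then (m : K) else 0 := by
  split_ifs with hk
  · simp [(hω.zpow_eq_one_iff_dvd k).2 hk]
  · have zpow_ne_one : ω ^ k ≠ 1 := mt (hω.zpow_eq_one_iff_dvd k).1 hk
    have zpow_pow_eq_one : (ω ^ k) ^ m = 1 := by
      rw [← zpow_natCast, zpow_comm, zpow_natCast, hω.pow_eq_one, _root_.one_zpow]
    rw [geom_sum_eq zpow_ne_one, zpow_pow_eq_one, sub_self, zero_div]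

theorem sum_range_zpow_neg_mul_mul_pow (hω : IsPrimitiveRoot ω m) (b : ℕ) {p : ℕ} (hp : p < m) :
    ∑ q ∈ Finset.range m, ω ^ (-(p * q : ℤ)) * (ω ^ b) ^ q = if b % m = p then (m : K) else 0 := by
  have hω₀ : ω ≠ 0 := hω.ne_zero (Nat.ne_zero_of_lt hp)
  have dvd_sub_iff : (m : ℤ) ∣ (b : ℤ) - p ↔ b % m = p := by
    rw [← Nat.modEq_iff_dvd, Nat.ModEq, Nat.mod_eq_of_lt hp, eq_comm]
  have combine_powers (q : ℕ) :
      ω ^ (-(p * q : ℤ)) * (ω ^ b) ^ q = (ω ^ ((b : ℤ) - p)) ^ q := by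
    rw [← zpow_natCast ω b, ← zpow_natCast _ q, ← zpow_natCast _ q, ← _root_.zpow_mul,
      ← _root_.zpow_mul, ← zpow_add₀ hω₀]
    ring_nf
  simp only [combine_powers, sum_range_zpow_pow_eq_ite hω, dvd_sub_iff]

variable [NeZero m]

theorem inv_smul_sum_sum_smul_pow {A : Type*} [Semiring A] [Module K A]
    (hω : IsPrimitiveRoot ω m) {x : A} (hx : x ^ m = 1) (b : ℕ) :
    (m : K)⁻¹ • ∑ p ∈ Finset.range m, ∑ q ∈ Finset.range m,
      (ω ^ (-(p * q : ℤ)) * (ω ^ b) ^ q) • x ^ p = x ^ b := by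
  have : NeZero (m : K) := hω.neZero'
  have inner_sum : ∀ p ∈ Finset.range m,
      ∑ q ∈ Finset.range m, (ω ^ (-(p * q : ℤ)) * (ω ^ b) ^ q) • x ^ p =
        if b % m = p then (m : K) • x ^ p else 0 := fun p hp ↦ by
    rw [← Finset.sum_smul, sum_range_zpow_neg_mul_mul_pow hω b (Finset.mem_range.1 hp), ite_smul,
      zero_smul]
  have mod_mem : b % m ∈ Finset.range m := Finset.mem_range.2 (Nat.mod_lt _ (NeZero.pos m))
  rw [Finset.sum_congr rfl inner_sum, Finset.sum_ite_eq, if_pos mod_mem,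
    inv_smul_smul₀ (NeZero.ne _), ← pow_eq_pow_mod b hx]

theorem inv_smul_sum_sum_smul_pow_kronecker_diagonal_pow {n o : Type*} [Fintype n] [DecidableEq n]
    [Fintype o] [DecidableEq o] (hω : IsPrimitiveRoot ω m) {A : Matrix n n K} (hA : A ^ m = 1)
    (b : o → ℕ) :
    (m : K)⁻¹ • ∑ p ∈ Finset.range m, ∑ q ∈ Finset.range m,
        ω ^ (-(p * q : ℤ)) • ((A ^ p) ⊗ₖ (diagonal (fun j ↦ ω ^ b j) ^ q)) =
      blockDiagonal fun j ↦ A ^ b j := by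
  have summand_eq (p q : ℕ) :
      ω ^ (-(p * q : ℤ)) • ((A ^ p) ⊗ₖ (diagonal (fun j ↦ ω ^ b j) ^ q)) =
        blockDiagonalAddMonoidHom n n o K
          fun j ↦ (ω ^ (-(p * q : ℤ)) * (ω ^ b j) ^ q) • A ^ p := by
    simp only [diagonal_pow, kronecker_diagonal, ← blockDiagonal_smul, op_smul_eq_smul,
      Pi.smul_def, Pi.pow_apply, smul_smul, blockDiagonalAddMonoidHom_apply]
  simp only [summand_eq, ← map_sum]
  rw [blockDiagonalAddMonoidHom_apply, ← blockDiagonal_smul]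
  congr 1 with j : 1
  simpa only [Pi.smul_apply, Finset.sum_apply] using inv_smul_sum_sum_smul_pow hω hA (b j)

end PrimitiveRoot

theorem phase_eq_diagonal_pow {R : Type*} [Semiring R] (ω : R) :
    !![1, 0; 0, ω] = diagonal fun i : Fin 2 ↦ ω ^ (i : ℕ) := by
  ext i j; fin_cases i <;> fin_cases j <;> simp

theorem blockDiagonal_phase_pow {R : Type*} [Semiring R] (ω : R) :
    (blockDiagonal fun j : Fin 2 ↦ !![1, 0; 0, ω] ^ (j : ℕ)) =
      diagonal fun ab : Fin 2 × Fin 2 ↦ if ab.1 = 1 ∧ ab.2 = 1 then ω else 1 := by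
  simp only [phase_eq_diagonal_pow, diagonal_pow, blockDiagonal_diagonal]
  congr 1 with ⟨a, b⟩
  fin_cases a <;> fin_cases b <;> simp

theorem crot_implements_controlled_phase_general {K : Type*} [Field K] {m : ℕ} [NeZero m] {ω : K}
    (hω : IsPrimitiveRoot ω m) :
    (m : K)⁻¹ • ∑ p ∈ Finset.range m, ∑ q ∈ Finset.range m,
        ω ^ (-(p * q : ℤ)) • ((!![1, 0; 0, ω] ^ p) ⊗ₖ (!![1, 0; 0, ω] ^ q)) =
      diagonal (fun ab : Fin 2 × Fin 2 ↦ if ab.1 = 1 ∧ ab.2 = 1 then ω else 1) := by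
  have phase_pow_eq_one : !![1, 0; 0, ω] ^ m = 1 := by
    rw [phase_eq_diagonal_pow, diagonal_pow, ← diagonal_one]
    congr 1 with i
    rw [Pi.pow_apply, pow_right_comm, hω.pow_eq_one, one_pow]
  rw [← blockDiagonal_phase_pow,
    ← inv_smul_sum_sum_smul_pow_kronecker_diagonal_pow hω phase_pow_eq_one, ← phase_eq_diagonal_pow]

/-- `(1/m) ∑_{p,q=0}^{m-1} ω^{-pq} (P_ω^p ⊗ P_ω^q) = CP_ω` where `ω = e^{2πi/m}`,
`P_ω = diag(1, ω)` and `CP_ω = diag(1,1,1,ω)`. -/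
theorem crot_implements_controlled_phase (m : ℕ) (hm : 1 ≤ m) (ω : ℂ)
    (hω : ω = Complex.exp (2 * Real.pi * Complex.I / m)) :
    ((m : ℂ))⁻¹ • ∑ p ∈ Finset.range m, ∑ q ∈ Finset.range m,
        ω ^ (-(p * q : ℤ)) • ((!![1, 0; 0, ω] ^ p) ⊗ₖ (!![1, 0; 0, ω] ^ q)) =
      Matrix.diagonal (fun ab : Fin 2 × Fin 2 => if ab.1 = 1 ∧ ab.2 = 1 then ω else 1) := by
  have : NeZero m := ⟨Nat.one_le_iff_ne_zero.1 hm⟩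
  exact crot_implements_controlled_phase_general (hω ▸ Complex.isPrimitiveRoot_exp m (NeZero.ne m))

end
end

section
/- Let H = (1/√2)·[[1, 1], [1, −1]] and S = [[1, 0], [0, i]] in the unitary group U(2), and let G be the subgroup of U(2) generated by H and S. Then G is finite and is a unitary 1-design: for every 2×2 complex matrix A, (1/|G|) ∑_{g∈G} g A g† = (tr(A)/2)·1. -/
noncomputable section

/-!
Both halves of the theorem rest on the fact that only scalar matrices commute with the Pauli
matrices `X` and `Z`.

* Finiteness: conjugation by `H` or `S` permutes `{±X, ±Y, ±Z}`, so the elements of `G` that commute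
  with the Pauli matrices form a subgroup of finite index. They are scalars `c`, and since `det H`
  and `det S` are fourth roots of unity, `c ^ 8 = (det c) ^ 4 = 1`.
* Design property: `G` contains `Z = S ^ 2` and `X = H Z H⁻¹`. The sum `∑ g A g†` commutes with `G`,
  so it is a scalar, which is determined by its trace `|G| tr A`.
-/

open Matrix
open scoped Pointwise

section Normalizer

variable {G : Type*} [Group G]

theorem finite_of_le_normalizer_of_finite_inf_centralizer {K : Subgroup G} {s : Set G}
    (hs : s.Finite) (hK : K ≤ Subgroup.normalizer s)
    (hfin : Finite ↥(K ⊓ Subgroup.centralizer s)) : Finite K := by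
  have := hs.to_subtype
  let conj (g : K) (x : s) : s :=
    ⟨g * x * (g : G)⁻¹, Subgroup.le_set_normalizer_iff.1 hK g g.2 x x.2⟩
  have inv_mul_mem {g h : K} (hgh : conj g = conj h) :
      (g : G)⁻¹ * h ∈ K ⊓ Subgroup.centralizer s := by
    refine ⟨(g⁻¹ * h).2, Subgroup.mem_centralizer_iff.2 fun x hx => ?_⟩
    have hx' : g * x * (g : G)⁻¹ = h * x * (h : G)⁻¹ :=
      congrArg Subtype.val (congrFun hgh ⟨x, hx⟩)
    calc x * ((g : G)⁻¹ * h) = (g : G)⁻¹ * (g * x * (g : G)⁻¹) * h := by group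
      _ = (g : G)⁻¹ * h * x := by rw [hx']; group
  refine Set.finite_univ_iff.1 (Set.Finite.of_finite_fibers conj (Set.toFinite _) ?_)
  rintro _ ⟨g, -, rfl⟩
  exact Set.Finite.of_injOn (f := fun h : K => (g : G)⁻¹ * h) (t := K ⊓ Subgroup.centralizer s)
    (fun h hh => inv_mul_mem hh.2.symm)
    ((mul_right_injective _).comp Subtype.val_injective).injOn (Set.toFinite _)

theorem mem_normalizer_union_neg [HasDistribNeg G] {t : Set G} (ht : t.Finite) {g : G}
    (hg : ∀ x ∈ t, g * x * g⁻¹ ∈ t ∪ -t) : g ∈ Subgroup.normalizer (t ∪ -t) := by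
  have : Finite ↥(t ∪ -t) := (ht.union ht.neg).to_subtype
  refine Subgroup.mem_normalizer_fintype fun x hx => ?_
  rcases hx with hx | hx
  · exact hg x hx
  · simpa [or_comm] using hg (-x) hx

end Normalizer

section UnitarySubgroup

variable {n R : Type*} [Fintype n] [DecidableEq n] [CommRing R]

theorem finite_setOf_mem_bot_and_det_pow_eq_one [IsDomain R] [Nonempty n] {k : ℕ} (hk : k ≠ 0) :
    {M : Matrix n n R | M ∈ (⊥ : Subalgebra R (Matrix n n R)) ∧ M.det ^ k = 1}.Finite := by
  have hm : 0 < Fintype.card n * k := by positivity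
  refine ((Polynomial.nthRootsFinset (Fintype.card n * k) (1 : R)).finite_toSet.image
    (algebraMap R (Matrix n n R))).subset ?_
  rintro _ ⟨⟨c, rfl⟩, hdet⟩
  refine ⟨c, (Polynomial.mem_nthRootsFinset hm 1).2 ?_, rfl⟩
  simpa [algebraMap_eq_diagonal, pow_mul] using hdet

variable [StarRing R]

theorem finite_of_le_normalizer_of_centralizer_eq_bot [IsDomain R] [Nonempty n]
    {G : Subgroup (unitaryGroup n R)} {s : Set (unitaryGroup n R)} (hs : s.Finite)
    (hscalar : Subalgebra.centralizer R ((↑) '' s : Set (Matrix n n R)) = ⊥)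
    (hG : G ≤ Subgroup.normalizer s) {k : ℕ} (hk : k ≠ 0)
    (hdet : ∀ g ∈ G, (g : Matrix n n R).det ^ k = 1) : Finite G := by
  refine finite_of_le_normalizer_of_finite_inf_centralizer hs hG ?_
  refine Set.Finite.to_subtype (((finite_setOf_mem_bot_and_det_pow_eq_one hk).preimage
    Subtype.val_injective.injOn).subset ?_)
  rintro g ⟨hgG, hgs⟩
  refine ⟨hscalar ▸ ?_, hdet g hgG⟩
  rintro _ ⟨x, hx, rfl⟩
  exact congrArg Subtype.val (Subgroup.mem_centralizer_iff.1 hgs x hx)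

/-- The unnormalised twirl `∑ g A g†` of a matrix `A` over a group `G` of unitary matrices. It is
a `finsum`, hence meaningful only for finite `G`. -/
def twirl (G : Subgroup (unitaryGroup n R)) (A : Matrix n n R) : Matrix n n R :=
  ∑ᶠ g : G, (g.1 : Matrix n n R) * A * star (g.1 : Matrix n n R)

variable {G : Subgroup (unitaryGroup n R)} [Finite G]

theorem conj_twirl (A : Matrix n n R) {h : unitaryGroup n R} (hh : h ∈ G) :
    (h : Matrix n n R) * twirl G A * star (h : Matrix n n R) = twirl G A := by
  have := Fintype.ofFinite G
  simp only [twirl, finsum_eq_sum_of_fintype, Finset.mul_sum, Finset.sum_mul]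
  refine Fintype.sum_equiv (Equiv.mulLeft ⟨h, hh⟩) _ _ fun g => ?_
  simp [mul_assoc]

theorem twirl_mem_centralizer (A : Matrix n n R) :
    twirl G A ∈ Subalgebra.centralizer R ((↑) '' (G : Set (unitaryGroup n R))) := by
  rintro _ ⟨h, hh, rfl⟩
  calc (h : Matrix n n R) * twirl G A
      = h * twirl G A * star (h : Matrix n n R) * h := by
        rw [mul_assoc _ (star _), UnitaryGroup.star_mul_self, mul_one]
    _ = twirl G A * h := by rw [conj_twirl A hh]

theorem trace_twirl (A : Matrix n n R) : (twirl G A).trace = Nat.card G * A.trace := by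
  have := Fintype.ofFinite G
  have trace_conj (g : G) : (g.1.1 * A * star g.1.1).trace = A.trace := by
    rw [trace_mul_comm, ← mul_assoc, UnitaryGroup.star_mul_self, one_mul]
  simp [twirl, finsum_eq_sum_of_fintype, trace_sum, trace_conj]

end UnitarySubgroup

section OneDesign

variable {n K : Type*} [Fintype n] [DecidableEq n] [Field K] [CharZero K]

theorem eq_trace_div_card_smul_one_of_mem_bot {M : Matrix n n K}
    (hM : M ∈ (⊥ : Subalgebra K (Matrix n n K))) : M = (M.trace / Fintype.card n) • 1 := by
  cases isEmpty_or_nonempty n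
  · exact Subsingleton.elim _ _
  · obtain ⟨c, rfl⟩ := Algebra.mem_bot.1 hM
    simp [Algebra.algebraMap_eq_smul_one, trace_smul]

theorem inv_card_smul_twirl_of_centralizer_eq_bot [StarRing K]
    {G : Subgroup (unitaryGroup n K)} [Finite G]
    (hG : Subalgebra.centralizer K ((↑) '' (G : Set (unitaryGroup n K)) : Set (Matrix n n K)) = ⊥)
    (A : Matrix n n K) :
    (Nat.card G : K)⁻¹ • twirl G A = (A.trace / Fintype.card n) • 1 := by
  have hcard : (Nat.card G : K) ≠ 0 := Nat.cast_ne_zero.2 Nat.card_pos.ne'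
  have hscalar : twirl G A ∈ (⊥ : Subalgebra K (Matrix n n K)) := hG ▸ twirl_mem_centralizer A
  rw [eq_trace_div_card_smul_one_of_mem_bot hscalar, trace_twirl,
    smul_smul, mul_div_assoc, inv_mul_cancel_left₀ hcard]

end OneDesign

section Pauli

theorem star_fin_two_of {R : Type*} [Star R] (a b c d : R) :
    star !![a, b; c, d] = !![star a, star c; star b, star d] := by
  ext i j; fin_cases i <;> fin_cases j <;> rfl

theorem centralizer_pauli_eq_bot {K : Type*} [Field K] [NeZero (2 : K)] :
    Subalgebra.centralizer K
      ({!![0, 1; 1, 0], !![1, 0; 0, -1]} : Set (Matrix (Fin 2) (Fin 2) K)) = ⊥ := by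
  refine eq_bot_iff.2 fun M hM => ?_
  have commX : !![0, 1; 1, 0] * M = M * !![0, 1; 1, 0] := hM _ (by simp)
  have commZ : !![1, 0; 0, -1] * M = M * !![1, 0; 0, -1] := hM _ (by simp)
  rw [M.eta_fin_two] at commX commZ
  have upper : M 0 1 = 0 := by
    simpa [eq_neg_iff_add_eq_zero, ← two_mul, two_ne_zero] using congrFun₂ commZ 0 1
  have lower : M 1 0 = 0 := by
    simpa [neg_eq_iff_add_eq_zero, ← two_mul, two_ne_zero] using congrFun₂ commZ 1 0
  have diag : M 1 1 = M 0 0 := by simpa using congrFun₂ commX 0 1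
  refine Algebra.mem_bot.2 ⟨M 0 0, ?_⟩
  rw [M.eta_fin_two, upper, lower, diag]
  ext i j; fin_cases i <;> fin_cases j <;> simp [algebraMap_matrix_apply]

/-- The Pauli matrix `X`, as an element of `U(2)`. -/
def pauliX : unitaryGroup (Fin 2) ℂ :=
  ⟨!![0, 1; 1, 0], by simp [mem_unitaryGroup_iff, star_fin_two_of, one_fin_two]⟩

/-- The Pauli matrix `Y`, as an element of `U(2)`. -/
def pauliY : unitaryGroup (Fin 2) ℂ :=
  ⟨!![0, -Complex.I; Complex.I, 0],
    by simp [mem_unitaryGroup_iff, star_fin_two_of, one_fin_two]⟩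

/-- The Pauli matrix `Z`, as an element of `U(2)`. -/
def pauliZ : unitaryGroup (Fin 2) ℂ :=
  ⟨!![1, 0; 0, -1], by simp [mem_unitaryGroup_iff, star_fin_two_of, one_fin_two]⟩

/-- The six elements `±X`, `±Y`, `±Z` of `U(2)`. -/
def signedPaulis : Set (unitaryGroup (Fin 2) ℂ) :=
  {pauliX, pauliY, pauliZ} ∪ -{pauliX, pauliY, pauliZ}

theorem finite_signedPaulis : signedPaulis.Finite :=
  (Set.toFinite _).union (Set.toFinite _).neg

theorem centralizer_eq_bot_of_pauli_mem {s : Set (unitaryGroup (Fin 2) ℂ)}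
    (hX : pauliX ∈ s) (hZ : pauliZ ∈ s) :
    Subalgebra.centralizer ℂ ((↑) '' s : Set (Matrix (Fin 2) (Fin 2) ℂ)) = ⊥ := by
  refine eq_bot_mono (Subalgebra.centralizer_le ℂ _ _ ?_) centralizer_pauli_eq_bot
  rintro _ (rfl | rfl)
  exacts [⟨pauliX, hX, rfl⟩, ⟨pauliZ, hZ, rfl⟩]

end Pauli

section Clifford

theorem inv_sqrt_two_mul_self : (Real.sqrt 2 : ℂ)⁻¹ * (Real.sqrt 2 : ℂ)⁻¹ = 2⁻¹ := by
  rw [← mul_inv, ← Complex.ofReal_mul, Real.mul_self_sqrt zero_le_two, Complex.ofReal_ofNat]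

/-- The Hadamard gate `H`. -/
def hadamardGate : unitaryGroup (Fin 2) ℂ :=
  ⟨(Real.sqrt 2 : ℂ)⁻¹ • !![1, 1; 1, -1], by
    have half_add_half : (2⁻¹ + 2⁻¹ : ℂ) = 1 := by norm_num
    simp [mem_unitaryGroup_iff, star_fin_two_of, one_fin_two, inv_sqrt_two_mul_self,
      half_add_half]⟩

/-- The phase gate `S`. -/
def phaseGate : unitaryGroup (Fin 2) ℂ :=
  ⟨!![1, 0; 0, Complex.I], by simp [mem_unitaryGroup_iff, star_fin_two_of, one_fin_two]⟩

/-- The single-qubit Clifford group, generated by the Hadamard and phase gates. -/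
def cliffordGroup : Subgroup (unitaryGroup (Fin 2) ℂ) :=
  Subgroup.closure {hadamardGate, phaseGate}

theorem hadamardGate_conj_pauliX : hadamardGate * pauliX * hadamardGate⁻¹ = pauliZ :=
  mul_inv_eq_iff_eq_mul.2 <| Subtype.ext <| by simp [hadamardGate, pauliX, pauliZ]

theorem hadamardGate_conj_pauliY : hadamardGate * pauliY * hadamardGate⁻¹ = -pauliY :=
  mul_inv_eq_iff_eq_mul.2 <| Subtype.ext <| by
    simp [hadamardGate, pauliY, Unitary.coe_neg, mul_comm]

theorem hadamardGate_conj_pauliZ : hadamardGate * pauliZ * hadamardGate⁻¹ = pauliX :=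
  mul_inv_eq_iff_eq_mul.2 <| Subtype.ext <| by simp [hadamardGate, pauliX, pauliZ]

theorem phaseGate_conj_pauliX : phaseGate * pauliX * phaseGate⁻¹ = pauliY :=
  mul_inv_eq_iff_eq_mul.2 <| Subtype.ext <| by simp [phaseGate, pauliX, pauliY]

theorem phaseGate_conj_pauliY : phaseGate * pauliY * phaseGate⁻¹ = -pauliX :=
  mul_inv_eq_iff_eq_mul.2 <| Subtype.ext <| by simp [phaseGate, pauliX, pauliY, Unitary.coe_neg]

theorem phaseGate_conj_pauliZ : phaseGate * pauliZ * phaseGate⁻¹ = pauliZ :=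
  mul_inv_eq_iff_eq_mul.2 <| Subtype.ext <| by simp [phaseGate, pauliZ]

theorem phaseGate_mul_self : phaseGate * phaseGate = pauliZ :=
  Subtype.ext <| by simp [phaseGate, pauliZ]

theorem cliffordGroup_le_normalizer_signedPaulis :
    cliffordGroup ≤ Subgroup.normalizer signedPaulis := by
  refine (Subgroup.closure_le _).2 ?_
  rintro g (rfl | rfl) <;> refine mem_normalizer_union_neg (Set.toFinite _) ?_ <;>
    rintro x (rfl | rfl | rfl)
  · simp [hadamardGate_conj_pauliX]
  · simp [hadamardGate_conj_pauliY]
  · simp [hadamardGate_conj_pauliZ]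
  · simp [phaseGate_conj_pauliX]
  · simp [phaseGate_conj_pauliY]
  · simp [phaseGate_conj_pauliZ]

theorem det_hadamardGate : (hadamardGate : Matrix (Fin 2) (Fin 2) ℂ).det = -1 := by
  norm_num [hadamardGate, det_fin_two, inv_sqrt_two_mul_self]

theorem det_phaseGate : (phaseGate : Matrix (Fin 2) (Fin 2) ℂ).det = Complex.I := by
  simp [phaseGate, det_fin_two]

theorem det_pow_four_of_mem_cliffordGroup {g : unitaryGroup (Fin 2) ℂ} (hg : g ∈ cliffordGroup) :
    (g : Matrix (Fin 2) (Fin 2) ℂ).det ^ 4 = 1 := by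
  let detPowFour : unitaryGroup (Fin 2) ℂ →* ℂ :=
    ((powMonoidHom 4).comp detMonoidHom).comp (unitaryGroup (Fin 2) ℂ).subtype
  suffices cliffordGroup ≤ detPowFour.ker from this hg
  refine (Subgroup.closure_le _).2 ?_
  rintro g (rfl | rfl)
  · change (hadamardGate : Matrix (Fin 2) (Fin 2) ℂ).det ^ 4 = 1
    rw [det_hadamardGate]; norm_num
  · change (phaseGate : Matrix (Fin 2) (Fin 2) ℂ).det ^ 4 = 1
    rw [det_phaseGate, Complex.I_pow_four]

theorem pauliZ_mem_cliffordGroup : pauliZ ∈ cliffordGroup := by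
  have hS : phaseGate ∈ cliffordGroup := Subgroup.subset_closure (by simp)
  exact phaseGate_mul_self ▸ mul_mem hS hS

theorem pauliX_mem_cliffordGroup : pauliX ∈ cliffordGroup := by
  have hH : hadamardGate ∈ cliffordGroup := Subgroup.subset_closure (by simp)
  exact hadamardGate_conj_pauliZ ▸ mul_mem (mul_mem hH pauliZ_mem_cliffordGroup) (inv_mem hH)

theorem finite_cliffordGroup : Finite cliffordGroup :=
  finite_of_le_normalizer_of_centralizer_eq_bot finite_signedPaulis
    (centralizer_eq_bot_of_pauli_mem (by simp [signedPaulis]) (by simp [signedPaulis]))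
    cliffordGroup_le_normalizer_signedPaulis four_ne_zero
    fun _ => det_pow_four_of_mem_cliffordGroup

end Clifford

/-- The subgroup of `U(2)` generated by the Hadamard gate `H` and the phase gate `S` is finite
and is a unitary 1-design. -/
theorem clifford_group_one_design (H S : Matrix.unitaryGroup (Fin 2) ℂ)
    (hH : (H : Matrix (Fin 2) (Fin 2) ℂ) = ((Real.sqrt 2 : ℂ))⁻¹ • !![1, 1; 1, -1])
    (hS : (S : Matrix (Fin 2) (Fin 2) ℂ) = !![1, 0; 0, Complex.I]) :
    Finite (Subgroup.closure {H, S} : Subgroup (Matrix.unitaryGroup (Fin 2) ℂ)) ∧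
    ∀ A : Matrix (Fin 2) (Fin 2) ℂ,
      ((Nat.card (Subgroup.closure {H, S} : Subgroup (Matrix.unitaryGroup (Fin 2) ℂ)) : ℂ))⁻¹ •
          ∑ᶠ g : (Subgroup.closure {H, S} : Subgroup (Matrix.unitaryGroup (Fin 2) ℂ)),
            gMat g * A * star (gMat g) =
        (A.trace / 2) • 1 := by
  obtain rfl : H = hadamardGate := Subtype.ext hH
  obtain rfl : S = phaseGate := Subtype.ext hS
  have finite_clifford : Finite cliffordGroup := finite_cliffordGroup
  have scalar_commutant : Subalgebra.centralizer ℂ ((↑) ''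
      (cliffordGroup : Set (unitaryGroup (Fin 2) ℂ)) : Set (Matrix (Fin 2) (Fin 2) ℂ)) = ⊥ :=
    centralizer_eq_bot_of_pauli_mem pauliX_mem_cliffordGroup pauliZ_mem_cliffordGroup
  refine ⟨finite_clifford, fun A => ?_⟩
  exact (inv_card_smul_twirl_of_centralizer_eq_bot scalar_commutant A).trans (by simp)

end
end
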